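/- Let (A,Λ) be any associative form ring with 1, let n ≥ 4, and let (I_1,Γ_1), …, (I_m,Γ_m) be form ideals of (A,Λ). Consider an arbitrary arrangement of brackets ⟦…⟧ on m factors with cut point s (i.e. the outermost commutator separates the first s factors from the last m−s). Then ⟦EU(2n,I_1,Γ_1), EU(2n,I_2,Γ_2), …, EU(2n,I_m,Γ_m)⟧ = [EU(2n,(I_1,Γ_1)∘…∘(I_s,Γ_s)), EU(2n,(I_{s+1},Γ_{s+1})∘…∘(I_m,Γ_m))], where the bracketing of the symmetrised products on the right hand side coincides with the bracketing of the commutators on the left hand side. -/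

import Mathlib

open Matrix
open scoped commutatorElement

/-- Bak's form ring data on a ring `A`: an involution `bar`, a central symmetry
`λ` with `λ λ̄ = 1`, and a form parameter `Λ`. -/
structure FormRingData (A : Type*) [Ring A] where
  bar : A →+ A
  bar_mul : ∀ a b : A, bar (a * b) = bar b * bar a
  bar_bar : ∀ a : A, bar (bar a) = a
  lam : A
  lam_comm : ∀ a : A, lam * a = a * lam
  lam_bar : lam * bar lam = 1
  Lambda : AddSubgroup A
  lambdaMin_mem : ∀ c : A, c - lam * bar c ∈ Lambda
  lambdaMax_mem : ∀ x ∈ Lambda, x = -(lam * bar x)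
  lambda_conj : ∀ (c : A), ∀ x ∈ Lambda, c * x * bar c ∈ Lambda

namespace FormRingData

variable {A : Type*} [Ring A]

/-- Integral powers of the symmetry `λ`; negative powers use `λ̄ = λ⁻¹`. -/
def lpow (D : FormRingData A) (k : ℤ) : A :=
  if 0 ≤ k then D.lam ^ k.toNat else (D.bar D.lam) ^ (-k).toNat

end FormRingData

/-- The index set `Ω = {1,…,n,−n,…,−1}`, coded as `Fin n × Bool`
(second component `true` = positive index). -/
abbrev Idx (n : ℕ) := Fin n × Bool

namespace Idx

/-- The involution `i ↦ −i` on indices. -/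
def neg {n : ℕ} (i : Idx n) : Idx n := (i.1, !i.2)

/-- The sign `ε(i) ∈ {±1}`. -/
def eps {n : ℕ} (i : Idx n) : ℤ := if i.2 then 1 else -1

theorem neg_ne {n : ℕ} (i : Idx n) : neg i ≠ i := by
  simp [neg, Prod.ext_iff]

theorem neg_injective {n : ℕ} : Function.Injective (neg (n := n)) := by
  intro i j h
  simp only [neg, Prod.mk.injEq] at h
  refine Prod.ext h.1 ?_
  have h2 := h.2
  cases hi : i.2 <;> cases hj : j.2 <;> simp_all

theorem neg_neg {n : ℕ} (i : Idx n) : neg (neg i) = i := by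
  simp [neg]

end Idx

/-- `GL(2n, A)`, realised as the units of the `Ω × Ω` matrix ring over `A`. -/
abbrev GLn (A : Type*) [Ring A] (n : ℕ) := (Matrix (Idx n) (Idx n) A)ˣ

section aux

theorem one_add_mul_one_sub {R : Type*} [Ring R] {X : R} (h : X * X = 0) :
    (1 + X) * (1 - X) = 1 := by
  have hh : (1 + X) * (1 - X) = 1 - X * X := by noncomm_ring
  rw [hh, h, sub_zero]

theorem one_sub_mul_one_add {R : Type*} [Ring R] {X : R} (h : X * X = 0) :
    (1 - X) * (1 + X) = 1 := by
  have hh : (1 - X) * (1 + X) = 1 - X * X := by noncomm_ring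
  rw [hh, h, sub_zero]

theorem stdBasisMatrix_neg' {A : Type*} [Ring A] {n : ℕ} (i j : Idx n) (c : A) :
    Matrix.single i j (-c) = -Matrix.single i j c := by
  refine eq_neg_of_add_eq_zero_left ?_
  rw [← Matrix.single_add]
  simp

end aux

namespace FormRingData

variable {A : Type*} [Ring A] {n : ℕ}

/-- The off-diagonal part of a short root element. -/
def Xmat (D : FormRingData A) (i j : Idx n) (c : A) : Matrix (Idx n) (Idx n) A :=
  Matrix.single i j c -
    Matrix.single (Idx.neg j) (Idx.neg i) (D.lpow ((Idx.eps j - Idx.eps i) / 2) * D.bar c)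

theorem Xmat_mul (D : FormRingData A) {i j : Idx n} (hij : i ≠ j) (c c' : A) :
    D.Xmat i j c * D.Xmat i j c' = 0 := by
  unfold Xmat
  rw [sub_mul, mul_sub, mul_sub,
    Matrix.single_mul_single_of_ne _ _ _ _ (Ne.symm hij),
    Matrix.single_mul_single_of_ne _ _ _ _ (Ne.symm (Idx.neg_ne j)),
    Matrix.single_mul_single_of_ne _ _ _ _ (Idx.neg_ne i),
    Matrix.single_mul_single_of_ne _ _ _ _ (fun h => hij (Idx.neg_injective h))]
  simp

theorem Xmat_neg (D : FormRingData A) (i j : Idx n) (c : A) :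
    D.Xmat i j (-c) = -D.Xmat i j c := by
  unfold Xmat
  rw [map_neg, mul_neg, stdBasisMatrix_neg', stdBasisMatrix_neg']
  abel

/-- The elementary short root unipotent `T_{ij}(c)`, for `i ≠ ±j`
(with junk value `1` when `i = j`). -/
def TS (D : FormRingData A) (i j : Idx n) (c : A) : GLn A n :=
  if h : i = j then 1 else
    { val := 1 + D.Xmat i j c
      inv := 1 + D.Xmat i j (-c)
      val_inv := by
        rw [D.Xmat_neg, ← sub_eq_add_neg]
        exact one_add_mul_one_sub (D.Xmat_mul h c c)
      inv_val := by
        rw [D.Xmat_neg, ← sub_eq_add_neg]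
        exact one_sub_mul_one_add (D.Xmat_mul h c c) }

/-- The elementary long root unipotent `T_{i,−i}(c)`. -/
def TL (D : FormRingData A) (i : Idx n) (c : A) : GLn A n where
  val := 1 + Matrix.single i (Idx.neg i) c
  inv := 1 + Matrix.single i (Idx.neg i) (-c)
  val_inv := by
    rw [stdBasisMatrix_neg', ← sub_eq_add_neg]
    exact one_add_mul_one_sub (Matrix.single_mul_single_of_ne _ _ _ _ (Idx.neg_ne i) _)
  inv_val := by
    rw [stdBasisMatrix_neg', ← sub_eq_add_neg]
    exact one_sub_mul_one_add (Matrix.single_mul_single_of_ne _ _ _ _ (Idx.neg_ne i) _)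

/-- The elementary unitary transvection `T_{ij}(c)` (long or short root type
according to whether `j = −i`). -/
def T (D : FormRingData A) (i j : Idx n) (c : A) : GLn A n :=
  if j = Idx.neg i then D.TL i c else D.TS i j c

/-- The elementary commutator `Y_{ij}(a,b) = [T_{ij}(a), T_{ji}(b)]`. -/
def Y (D : FormRingData A) (i j : Idx n) (a b : A) : GLn A n :=
  ⁅D.T i j a, D.T j i b⁆

/-- The elementary conjugate `Z_{ij}(a,c) = T_{ji}(c) T_{ij}(a) T_{ji}(−c)`. -/
def Z (D : FormRingData A) (i j : Idx n) (a c : A) : GLn A n :=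
  D.T j i c * D.T i j a * D.T j i (-c)

/-- The set of elementary unitary transvections of level `(I,Γ)`. -/
def transvGen (D : FormRingData A) (n : ℕ) (I Γ : AddSubgroup A) : Set (GLn A n) :=
  {x | ∃ i j : Idx n, i ≠ j ∧ i ≠ Idx.neg j ∧ ∃ c ∈ I, x = D.TS i j c} ∪
    {x | ∃ i : Idx n, ∃ g ∈ Γ, x = D.TL i (D.lpow (-(Idx.eps i + 1) / 2) * g)}

/-- The unrelative elementary subgroup `FU(2n, I, Γ)`. -/
def FU (D : FormRingData A) (n : ℕ) (I Γ : AddSubgroup A) : Subgroup (GLn A n) :=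
  Subgroup.closure (D.transvGen n I Γ)

/-- The absolute elementary unitary group `EU(2n, A, Λ)`. -/
def EUmax (D : FormRingData A) (n : ℕ) : Subgroup (GLn A n) :=
  D.FU n ⊤ D.Lambda

/-- The relative elementary subgroup `EU(2n, I, Γ)`: the normal closure of
`FU(2n, I, Γ)` in `EU(2n, A, Λ)`. -/
def EU (D : FormRingData A) (n : ℕ) (I Γ : AddSubgroup A) : Subgroup (GLn A n) :=
  Subgroup.closure {x | ∃ g ∈ D.EUmax n, ∃ t ∈ D.transvGen n I Γ, x = g * t * g⁻¹}

/-- The additive subgroup generated by products `st`, `s ∈ S`, `t ∈ T`. -/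
def mulSub (S T : AddSubgroup A) : AddSubgroup A :=
  AddSubgroup.closure {x | ∃ a ∈ S, ∃ b ∈ T, x = a * b}

/-- The symmetrised product `ST + TS` of two (additive subgroups underlying)
two-sided ideals. -/
def symI (S T : AddSubgroup A) : AddSubgroup A :=
  mulSub S T ⊔ mulSub T S

/-- The minimal relative form parameter `Γ_min(K)` of level `K`. -/
def gammaMin (D : FormRingData A) (K : AddSubgroup A) : AddSubgroup A :=
  AddSubgroup.closure
    ({x | ∃ a ∈ K, x = a - D.lam * D.bar a} ∪
      {x | ∃ a ∈ K, ∃ c ∈ D.Lambda, x = a * c * D.bar a})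

/-- The relative form parameter `ˢΓ = ⟨ b γ b̄ ∣ b ∈ S, γ ∈ Γ ⟩`. -/
def conjPar (D : FormRingData A) (S Γ : AddSubgroup A) : AddSubgroup A :=
  AddSubgroup.closure {x | ∃ b ∈ S, ∃ g ∈ Γ, x = b * g * D.bar b}

/-- The relative form parameter of the symmetrised product
`(I,Γ)∘(J,Δ) = (IJ+JI, Γ_min(IJ+JI) + ᴶΓ + ᴵΔ)`. -/
def symG (D : FormRingData A) (I Γ J Δ : AddSubgroup A) : AddSubgroup A :=
  D.gammaMin (symI I J) ⊔ D.conjPar J Γ ⊔ D.conjPar I Δ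

/-- The elementary subgroup `EU(2n, (I,Γ)∘(J,Δ))` of the symmetrised product. -/
def EUsym (D : FormRingData A) (n : ℕ) (I Γ J Δ : AddSubgroup A) : Subgroup (GLn A n) :=
  D.EU n (symI I J) (D.symG I Γ J Δ)

/-- Position-dependent membership `a ∈ (I,Γ)` at position `(i,j)`:
`a ∈ I` for a short root position, `a ∈ λ^{−(ε(i)+1)/2}Γ` for a long one. -/
def pmem (D : FormRingData A) (I Γ : AddSubgroup A) {n : ℕ} (i j : Idx n) (a : A) : Prop :=
  if j = Idx.neg i then ∃ g ∈ Γ, a = D.lpow (-(Idx.eps i + 1) / 2) * g else a ∈ I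

end FormRingData

/-- A form ideal `(I,Γ)` of the form ring `(A,Λ)`. -/
structure FormIdeal {A : Type*} [Ring A] (D : FormRingData A) where
  I : AddSubgroup A
  Gamma : AddSubgroup A
  mul_mem_left : ∀ (c : A), ∀ x ∈ I, c * x ∈ I
  mul_mem_right : ∀ (c : A), ∀ x ∈ I, x * c ∈ I
  bar_mem : ∀ x ∈ I, D.bar x ∈ I
  gammaMin_le : D.gammaMin I ≤ Gamma
  gamma_le_I : Gamma ≤ I
  gamma_le_Lambda : Gamma ≤ D.Lambda
  gamma_conj : ∀ (c : A), ∀ x ∈ Gamma, c * x * D.bar c ∈ Gamma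

/-- An arbitrary arrangement of brackets on a multiple commutator of relative
elementary subgroups: a binary tree whose leaves are form ideals. -/
inductive CommTree {A : Type*} [Ring A] (D : FormRingData A) : Type _ where
  | leaf : FormIdeal D → CommTree D
  | node : CommTree D → CommTree D → CommTree D

namespace CommTree

variable {A : Type*} [Ring A] {D : FormRingData A}

/-- The multiple commutator subgroup `⟦EU(2n,I₁,Γ₁),…,EU(2n,I_m,Γ_m)⟧`
determined by the bracketing tree. -/
def grp (n : ℕ) : CommTree D → Subgroup (GLn A n)
  | leaf FI => D.EU n FI.I FI.Gamma
  | node t₁ t₂ => ⁅t₁.grp n, t₂.grp n⁆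

/-- The iterated symmetrised product `(I₁,Γ₁)∘…∘(I_m,Γ_m)` with the same
bracketing. -/
def idl : CommTree D → AddSubgroup A × AddSubgroup A
  | leaf FI => (FI.I, FI.Gamma)
  | node t₁ t₂ =>
      (FormRingData.symI t₁.idl.1 t₂.idl.1,
        D.symG t₁.idl.1 t₁.idl.2 t₂.idl.1 t₂.idl.2)

end CommTree


/-- Abstract root-graded group data. -/
structure RG (G : Type*) [Group G] (F Φ W : Type*) where
  X : F → Φ → Subgroup G
  opp : Φ → Φ
  top : F
  LP : F → F → F → Prop
  wt : W → Φ → ℤ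
  Dec : Φ → Φ → Φ → Φ → Prop
  Dj : Φ → Φ → Prop
  opp_opp : ∀ α, opp (opp α) = α
  wt_opp : ∀ φ α, wt φ (opp α) = - wt φ α
  gen : Subgroup.closure {x | ∃ α, x ∈ X top α} = ⊤
  LP_left : ∀ a, LP top a a
  LP_symm : ∀ a b c, LP a b c → LP b a c
  C0 : ∀ a b α x y, x ∈ X a α → y ∈ X b α → Commute x y
  C1 : ∀ a b c φ α β x y, LP a b c → 0 ≤ wt φ α → 0 < wt φ β → x ∈ X a α → y ∈ X b β →
    ⁅x, y⁆ ∈ Subgroup.closure {x | ∃ γ, 0 < wt φ γ ∧ x ∈ X c γ}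
  dich : ∀ α β, (∃ φ, wt φ α = 0 ∧ 0 < wt φ β) ∨
    ((∀ φ, wt φ α = wt φ β) ∧ (∀ a, X a α = X a β) ∧ ∀ a, X a (opp α) = X a (opp β)) ∨
    ((∀ φ, wt φ (opp α) = wt φ β) ∧ (∀ a, X a (opp α) = X a β) ∧ ∀ a, X a α = X a (opp β))
  dec_exists : ∀ α, ∃ γ δ σ, Dec α γ δ σ
  dec_ag : ∀ α γ δ σ, Dec α γ δ σ → ∃ φ, wt φ α = 0 ∧ 0 < wt φ γ
  dec_ad : ∀ α γ δ σ, Dec α γ δ σ → ∃ φ, wt φ α = 0 ∧ 0 < wt φ δ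
  dec_as : ∀ α γ δ σ, Dec α γ δ σ → ∃ φ, wt φ α = 0 ∧ 0 < wt φ σ
  dec_gd : ∀ α γ δ σ, Dec α γ δ σ → ∃ φ, wt φ γ = 0 ∧ 0 < wt φ δ
  dec_dg : ∀ α γ δ σ, Dec α γ δ σ → ∃ φ, wt φ δ = 0 ∧ 0 < wt φ γ
  dec_eq : ∀ α γ δ σ, Dec α γ δ σ → ∀ a, ∀ x ∈ X a α, ∃ d ∈ X top δ, ∃ g ∈ X a γ, ∃ s ∈ X a σ,
    x = ⁅d, g⁆ * s
  dj : ∀ α β, Dj α β → ∀ a b x y, (x ∈ X a α ∨ x ∈ X a (opp α)) →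
    (y ∈ X b β ∨ y ∈ X b (opp β)) → Commute x y
  move : ∀ β, ∀ P : Φ → Prop, (∀ α, Dj α β → P α) →
    (∀ α γ δ σ, Dec α γ δ σ → P γ → P σ → P α) → ∀ α, P α

namespace RG
variable {G F Φ W : Type*} [Group G] (R : RG G F Φ W)

def U (φ : W) (b : F) : Subgroup G := Subgroup.closure {x | ∃ γ, 0 < R.wt φ γ ∧ x ∈ R.X b γ}
def Fu (b : F) : Subgroup G := Subgroup.closure {x | ∃ γ, x ∈ R.X b γ}
def Eu (b : F) : Subgroup G := Subgroup.normalClosure {x | ∃ γ, x ∈ R.X b γ}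

instance (b : F) : (R.Eu b).Normal := Subgroup.normalClosure_normal

theorem LP_right (a : F) : R.LP a R.top a := R.LP_symm _ _ _ (R.LP_left a)

theorem U_le_Fu (φ : W) (b : F) : R.U φ b ≤ R.Fu b :=
  Subgroup.closure_mono (fun _ ⟨γ, _, h⟩ => ⟨γ, h⟩)
theorem Fu_le_Eu (b : F) : R.Fu b ≤ R.Eu b := Subgroup.closure_le_normalClosure
theorem X_le_Fu (b : F) (α : Φ) : R.X b α ≤ R.Fu b := fun _ h => Subgroup.subset_closure ⟨α, h⟩
theorem X_le_U {φ : W} (b : F) {α : Φ} (h : 0 < R.wt φ α) : R.X b α ≤ R.U φ b :=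
  fun _ hx => Subgroup.subset_closure ⟨α, h, hx⟩

theorem U_conj_gen {φ : W} {b : F} {γ : Φ} {z u : G} (hz : z ∈ R.X R.top γ)
    (hγ : 0 ≤ R.wt φ γ) (hu : u ∈ R.U φ b) : z * u * z⁻¹ ∈ R.U φ b := by
  unfold U at hu
  induction hu using Subgroup.closure_induction with
  | mem x hx =>
    obtain ⟨δ, hδ, hx⟩ := hx
    have h := R.C1 _ _ _ φ γ δ z x (R.LP_left b) hγ hδ hz hx
    have h2 := mul_mem h (R.X_le_U b hδ hx)
    rw [commutatorElement_def] at h2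
    simpa [U] using h2
  | one => simp
  | mul x y _ _ hx hy => have := mul_mem hx hy; simpa [mul_assoc] using this
  | inv x _ hx => have := inv_mem hx; simpa [mul_assoc] using this

theorem U_conj {φ : W} {b : F} {v u : G} (hv : v ∈ R.U φ R.top) (hu : u ∈ R.U φ b) :
    v * u * v⁻¹ ∈ R.U φ b := by
  suffices h : R.U φ R.top ≤ Subgroup.normalizer (R.U φ b : Set G) from
    (Subgroup.mem_normalizer_iff.1 (h hv) u).1 hu
  refine (Subgroup.closure_le _).2 ?_
  rintro z ⟨γ, hγ, hz⟩
  refine Subgroup.mem_normalizer_iff.2 fun x => ⟨R.U_conj_gen hz hγ.le, fun hx => ?_⟩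
  have := R.U_conj_gen (inv_mem hz) hγ.le hx
  simpa [mul_assoc] using this

theorem U_comm {φ : W} {b : F} {α : Φ} {x u : G} (hx : x ∈ R.X b α) (hα : 0 ≤ R.wt φ α)
    (hu : u ∈ R.U φ R.top) : ⁅x, u⁆ ∈ R.U φ b := by
  have key : ∀ v ∈ R.U φ R.top, v ∈ R.U φ R.top ∧ ⁅x, v⁆ ∈ R.U φ b := by
    intro v hv
    unfold U at hv
    induction hv using Subgroup.closure_induction with
    | mem v hv =>
      obtain ⟨δ, hδ, hv⟩ := hv
      exact ⟨R.X_le_U _ hδ hv, R.C1 _ _ _ φ α δ x v (R.LP_right b) hα hδ hx hv⟩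
    | one => exact ⟨one_mem _, by simp⟩
    | mul v w _ _ hv hw =>
      refine ⟨mul_mem hv.1 hw.1, ?_⟩
      have := mul_mem hv.2 (R.U_conj hv.1 hw.2)
      have e : ⁅x, v * w⁆ = ⁅x, v⁆ * (v * ⁅x, w⁆ * v⁻¹) := by simp only [commutatorElement_def]; group
      rwa [e]
    | inv v _ hv =>
      refine ⟨inv_mem hv.1, ?_⟩
      have := R.U_conj (inv_mem hv.1) (inv_mem hv.2)
      have e : ⁅x, v⁻¹⁆ = v⁻¹ * ⁅x, v⁆⁻¹ * v⁻¹⁻¹ := by simp only [commutatorElement_def]; group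
      rwa [e]
  exact (key u hu).2

/-- generic conjugation of an elementary conjugate -/
theorem Z_conj {φ : W} {b : F} {α δ : Φ} {x z d : G} (hx : x ∈ R.X b α)
    (hz : z ∈ R.X R.top (R.opp α)) (hd : d ∈ R.X R.top δ)
    (h0 : R.wt φ α = 0) (h1 : 0 < R.wt φ δ) :
    ∃ f ∈ R.U φ b, d * (z * x * z⁻¹) * d⁻¹ = (z * x * z⁻¹) * f := by
  have h0' : 0 ≤ R.wt φ (R.opp α) := by rw [R.wt_opp]; omega
  have hu : z⁻¹ * d * z⁻¹⁻¹ ∈ R.U φ R.top :=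
    R.U_conj_gen (inv_mem hz) h0' (R.X_le_U _ h1 hd)
  have h2 := R.U_comm (inv_mem hx) h0.ge hu
  have h3 := R.U_conj_gen hz h0' h2
  refine ⟨_, h3, ?_⟩
  simp only [commutatorElement_def]; group

/-- the group generated by elementary conjugates -/
def Gz (b : F) : Subgroup G :=
  Subgroup.closure {y | (∃ α, y ∈ R.X b α) ∨
    ∃ α, ∃ x ∈ R.X b α, ∃ z ∈ R.X R.top (R.opp α), y = z * x * z⁻¹}

theorem Fu_le_Gz (b : F) : R.Fu b ≤ R.Gz b :=
  Subgroup.closure_mono (fun _ h => Or.inl h)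

theorem Z_mem {b : F} {α : Φ} {x z : G} (hx : x ∈ R.X b α)
    (hz : z ∈ R.X R.top (R.opp α)) : z * x * z⁻¹ ∈ R.Gz b :=
  Subgroup.subset_closure (Or.inr ⟨α, x, hx, z, hz, rfl⟩)

theorem conj_cases {b : F} {α β : Φ} {x w : G} (hx : x ∈ R.X b α) (hw : w ∈ R.X R.top β) :
    w * x * w⁻¹ ∈ R.Fu b ∨ ((∀ φ, R.wt φ (R.opp α) = R.wt φ β) ∧ w ∈ R.X R.top (R.opp α)) := by
  rcases R.dich α β with ⟨φ, h0, h1⟩ | ⟨_, h, _⟩ | ⟨h1, h, _⟩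
  · left
    have h := R.C1 _ _ _ φ α β x w (R.LP_right b) h0.ge h1 hx hw
    have h := R.U_le_Fu _ _ h
    have h2 := mul_mem (inv_mem h) (R.X_le_Fu _ _ hx)
    convert h2 using 1
    simp only [commutatorElement_def]; group
  · left
    rw [← h] at hw
    have := R.C0 _ _ _ _ _ hw hx
    rw [this.eq]; simpa using R.X_le_Fu _ _ hx
  · right; exact ⟨h1, by rw [h]; exact hw⟩

theorem conj_ind {b : F} (M : Subgroup G) (w : G)
    (h : ∀ α, ∀ x ∈ R.X b α, w * x * w⁻¹ ∈ M) : ∀ f ∈ R.Fu b, w * f * w⁻¹ ∈ M := by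
  intro f hf
  have : R.Fu b ≤ M.comap (MulAut.conj w).toMonoidHom := by
    refine (Subgroup.closure_le _).2 ?_
    rintro x ⟨α, hx⟩
    simpa using h α x hx
  simpa using this hf

theorem stepA {b : F} {β : Φ} {w : G} (hw : w ∈ R.X R.top β) :
    ∀ f ∈ R.Fu b, w * f * w⁻¹ ∈ R.Gz b := by
  refine R.conj_ind _ _ fun α x hx => ?_
  rcases R.conj_cases hx hw with h | ⟨_, h⟩
  · exact R.Fu_le_Gz _ h
  · exact R.Z_mem hx h

theorem stepB {b : F} {φ : W} {β δ : Φ} {w d : G} (hw : w ∈ R.X R.top β) (hd : d ∈ R.X R.top δ)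
    (h0 : R.wt φ β = 0) (h1 : 0 < R.wt φ δ) :
    ∀ f ∈ R.Fu b, (d * w) * f * (d * w)⁻¹ ∈ R.Gz b := by
  refine R.conj_ind _ _ fun α x hx => ?_
  have e : (d * w) * x * (d * w)⁻¹ = d * (w * x * w⁻¹) * d⁻¹ := by group
  rw [e]
  rcases R.conj_cases hx hw with h | ⟨hh, h⟩
  · exact R.stepA hd _ h
  · have h0' : R.wt φ α = 0 := by have := hh φ; rw [R.wt_opp] at this; omega
    obtain ⟨f, hf, e⟩ := R.Z_conj hx h hd h0' h1
    rw [e]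
    exact mul_mem (R.Z_mem hx h) (R.Fu_le_Gz _ (R.U_le_Fu _ _ hf))

theorem stepB3 {b : F} {φ ψ : W} {β δ : Φ} {w d : G} (hw : w ∈ R.X R.top β) (hd : d ∈ R.X R.top δ)
    (h0 : R.wt φ β = 0) (h1 : 0 < R.wt φ δ) (h2 : R.wt ψ δ = 0) (h3 : 0 < R.wt ψ β) :
    ∀ f ∈ R.Fu b, (w * d * w⁻¹) * f * (w * d * w⁻¹)⁻¹ ∈ R.Gz b := by
  refine R.conj_ind _ _ fun α x hx => ?_
  have hw' := inv_mem hw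
  rcases R.conj_cases hx hw' with h | ⟨hh, h⟩
  · have := R.stepB hd hw h2 h3 _ h
    convert this using 1; group
  · have h0' : R.wt φ α = 0 := by have := hh φ; rw [R.wt_opp] at this; omega
    obtain ⟨f, hf, e⟩ := R.Z_conj hx h hd h0' h1
    have e2 : (w * d * w⁻¹) * x * (w * d * w⁻¹)⁻¹ = w * (d * (w⁻¹ * x * w⁻¹⁻¹) * d⁻¹) * w⁻¹ := by
      group
    rw [e2, e]
    have := mul_mem (R.Fu_le_Gz _ (R.X_le_Fu _ _ hx)) (R.stepA hw f (R.U_le_Fu _ _ hf))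
    convert this using 1; group

theorem stepC {b : F} {α : Φ} {x z w : G} (hx : x ∈ R.X b α)
    (hz : z ∈ R.X R.top (R.opp α)) (hw : w ∈ R.X R.top α) :
    w * (z * x * z⁻¹) * w⁻¹ ∈ R.Gz b := by
  obtain ⟨γ, δ, σ, hD⟩ := R.dec_exists α
  obtain ⟨d, hd, g, hg, s, hs, e⟩ := R.dec_eq _ _ _ _ hD _ w hw
  obtain ⟨φs, s0, s1⟩ := R.dec_as _ _ _ _ hD
  obtain ⟨φg, g0, g1⟩ := R.dec_ag _ _ _ _ hD
  obtain ⟨φd, d0, d1⟩ := R.dec_ad _ _ _ _ hD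
  obtain ⟨φ, h0, h1⟩ := R.dec_gd _ _ _ _ hD
  obtain ⟨ψ, k0, k1⟩ := R.dec_dg _ _ _ _ hD
  obtain ⟨f0, hf0, e0⟩ := R.Z_conj hx hz hs s0 s1
  obtain ⟨f1, hf1, e1⟩ := R.Z_conj hx hz (inv_mem hg) g0 g1
  obtain ⟨f2, hf2, e2⟩ := R.Z_conj hx hz (inv_mem hd) d0 d1
  obtain ⟨f3, hf3, e3⟩ := R.Z_conj hx hz hg g0 g1
  obtain ⟨f4, hf4, e4⟩ := R.Z_conj hx hz hd d0 d1
  have hy := R.Z_mem hx hz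
  generalize z * x * z⁻¹ = y at *
  -- contribution of f0
  have m0 : w * (s⁻¹ * f0 * s⁻¹⁻¹) * w⁻¹ ∈ R.Gz b :=
    R.Fu_le_Gz _ (R.U_le_Fu _ _ (R.U_conj_gen hw s0.ge (R.U_conj_gen (inv_mem hs) s1.le hf0)))
  have m1 := R.stepB3 (b := b) hd hg k0 k1 h0 h1 f1 (R.U_le_Fu _ _ hf1)
  have m2 := R.stepB (b := b) hg hd h0 h1 f2 (R.U_le_Fu _ _ hf2)
  have m3 := R.stepA (b := b) hd f3 (R.U_le_Fu _ _ hf3)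
  have m4 := R.Fu_le_Gz _ (R.U_le_Fu _ _ hf4)
  have key : w * y * w⁻¹ = y * f4 * (d * f3 * d⁻¹) * ((d * g) * f2 * (d * g)⁻¹) *
      ((d * g * d⁻¹) * f1 * (d * g * d⁻¹)⁻¹) * (w * (s⁻¹ * f0 * s⁻¹⁻¹) * w⁻¹) := by
    have a0 : f0 = y⁻¹ * (s * y * s⁻¹) := by rw [e0]; group
    have a1 : f1 = y⁻¹ * (g⁻¹ * y * g⁻¹⁻¹) := by rw [e1]; group
    have a2 : f2 = y⁻¹ * (d⁻¹ * y * d⁻¹⁻¹) := by rw [e2]; group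
    have a3 : f3 = y⁻¹ * (g * y * g⁻¹) := by rw [e3]; group
    have a4 : f4 = y⁻¹ * (d * y * d⁻¹) := by rw [e4]; group
    rw [a0, a1, a2, a3, a4, e]
    simp only [commutatorElement_def]; group
  rw [key]
  exact mul_mem (mul_mem (mul_mem (mul_mem (mul_mem hy m4) m3) m2) m1) m0

theorem Gz_conj_gen {b : F} {β : Φ} {w : G} (hw : w ∈ R.X R.top β) :
    ∀ y ∈ R.Gz b, w * y * w⁻¹ ∈ R.Gz b := by
  intro y hy
  have : R.Gz b ≤ (R.Gz b).comap (MulAut.conj w).toMonoidHom := by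
    refine (Subgroup.closure_le _).2 ?_
    rintro y (⟨α, hx⟩ | ⟨α, x, hx, z, hz, rfl⟩)
    · simpa using R.stepA hw y (R.X_le_Fu _ _ hx)
    · simp only [Subgroup.coe_comap, Set.mem_preimage, MulEquiv.toMonoidHom_eq_coe,
        MonoidHom.coe_coe, MulAut.conj_apply, SetLike.mem_coe]
      rcases R.dich α β with ⟨φ, h0, h1⟩ | ⟨_, h, _⟩ | ⟨h1, h, _⟩
      · obtain ⟨f, hf, e⟩ := R.Z_conj hx hz hw h0 h1
        rw [e]
        exact mul_mem (R.Z_mem hx hz) (R.Fu_le_Gz _ (R.U_le_Fu _ _ hf))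
      · rw [← h] at hw; exact R.stepC hx hz hw
      · rw [← h] at hw
        have := R.Z_mem hx (mul_mem hw hz)
        convert this using 1; group
  simpa using this hy

theorem normal_of_gen (M : Subgroup G)
    (h : ∀ α, ∀ w ∈ R.X R.top α, ∀ y ∈ M, w * y * w⁻¹ ∈ M) : M.Normal := by
  rw [← Subgroup.normalizer_eq_top_iff, eq_top_iff, ← R.gen, Subgroup.closure_le]
  rintro w ⟨α, hw⟩
  refine Subgroup.mem_normalizer_iff.2 fun x => ⟨h α w hw x, fun hx => ?_⟩
  have := h α _ (inv_mem hw) _ hx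
  simpa [mul_assoc] using this

theorem Eu_le_Gz (b : F) : R.Eu b ≤ R.Gz b := by
  have : (R.Gz b).Normal := R.normal_of_gen _ fun α w hw => R.Gz_conj_gen hw
  exact Subgroup.normalClosure_le_normal fun x hx => Subgroup.subset_closure (Or.inl hx)

theorem comm_iff (Q : Subgroup G) [Q.Normal] (x y : G) :
    ⁅x, y⁆ ∈ Q ↔ Commute (x : G ⧸ Q) (y : G ⧸ Q) := by
  rw [← QuotientGroup.eq_one_iff, ← commutatorElement_eq_one_iff_commute]
  rfl

/-- the subgroup of elements commuting with `x` modulo `Q` -/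
def Cn (Q : Subgroup G) [Q.Normal] (x : G) : Subgroup G where
  carrier := {y | ⁅x, y⁆ ∈ Q}
  mul_mem' := by
    intro a b ha hb
    simp only [Set.mem_ofPred_eq, comm_iff] at *
    exact ha.mul_right hb
  one_mem' := by simp
  inv_mem' := by
    intro a ha
    simp only [Set.mem_ofPred_eq, comm_iff] at *
    exact ha.inv_right

theorem mem_Cn {Q : Subgroup G} [Q.Normal] {x y : G} : y ∈ Cn Q x ↔ ⁅x, y⁆ ∈ Q := Iff.rfl
theorem mem_Cn_symm {Q : Subgroup G} [Q.Normal] {x y : G} : y ∈ Cn Q x ↔ x ∈ Cn Q y := by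
  rw [mem_Cn, mem_Cn, comm_iff, comm_iff]; exact ⟨fun h => h.symm, fun h => h.symm⟩
theorem mem_Cn_conj {Q : Subgroup G} [hQ : Q.Normal] {x y d : G} :
    d * x * d⁻¹ ∈ Cn Q y ↔ x ∈ Cn Q (d⁻¹ * y * d) := by
  have e : ⁅y, d * x * d⁻¹⁆ = d * ⁅d⁻¹ * y * d, x⁆ * d⁻¹ := by
    simp only [commutatorElement_def]; group
  rw [mem_Cn, mem_Cn, e]
  refine ⟨fun h => ?_, fun h => hQ.conj_mem _ h _⟩
  have := hQ.conj_mem _ h d⁻¹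
  simpa [mul_assoc] using this

theorem U_le_of {Q : Subgroup G} {c : F} (hX : ∀ γ, R.X c γ ≤ Q) (φ : W) : R.U φ c ≤ Q :=
  (Subgroup.closure_le _).2 (by rintro x ⟨γ, _, hx⟩; exact hX γ hx)

theorem comm_gen {Q : Subgroup G} [Q.Normal] {a b c : F} (hX : ∀ γ, R.X c γ ≤ Q)
    (hL : R.LP a b c) {γ : Φ} {x : G} (hx : x ∈ R.X a γ)
    (hY : ∀ y ∈ R.X b (R.opp γ), ⁅x, y⁆ ∈ Q) : R.Fu b ≤ Cn Q x := by
  refine (Subgroup.closure_le _).2 ?_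
  rintro y ⟨β, hy⟩
  change ⁅x, y⁆ ∈ Q
  rcases R.dich γ β with ⟨φ, h0, h1⟩ | ⟨_, h, _⟩ | ⟨h1, h, _⟩
  · exact R.U_le_of hX φ (R.C1 _ _ _ φ γ β x y hL h0.ge h1 hx hy)
  · rw [← h] at hy
    rw [commutatorElement_eq_one_iff_commute.2 (R.C0 _ _ _ _ _ hx hy)]; exact one_mem _
  · rw [← h] at hy; exact hY y hy

theorem S_step {Q : Subgroup G} [Q.Normal] {a b c : F} (hX : ∀ γ, R.X c γ ≤ Q)
    (hL : R.LP a b c) {α γ δ σ : Φ} (hD : R.Dec α γ δ σ)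
    (hγ : ∀ x ∈ R.X a γ, ∀ y ∈ R.X b (R.opp γ), ⁅x, y⁆ ∈ Q)
    (hσ : ∀ x ∈ R.X a σ, ∀ y ∈ R.X b (R.opp σ), ⁅x, y⁆ ∈ Q) :
    ∀ x ∈ R.X a α, ∀ y ∈ R.X b (R.opp α), ⁅x, y⁆ ∈ Q := by
  intro x hx y hy
  obtain ⟨d, hd, g, hg, s, hs, e⟩ := R.dec_eq _ _ _ _ hD _ x hx
  obtain ⟨φd, d0, d1⟩ := R.dec_ad _ _ _ _ hD
  have cg := R.comm_gen hX hL hg (hγ g hg)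
  have cs := R.comm_gen hX hL hs (hσ s hs)
  have hyF := R.X_le_Fu _ _ hy
  rw [← mem_Cn, mem_Cn_symm]
  have e' : x = d * g * d⁻¹ * g⁻¹ * s := by rw [e, commutatorElement_def]
  rw [e']
  refine mul_mem (mul_mem ?_ (inv_mem (mem_Cn_symm.1 (cg hyF)))) (mem_Cn_symm.1 (cs hyF))
  rw [mem_Cn_conj, mem_Cn_symm]
  refine cg ?_
  have h := R.U_le_Fu _ _ (R.C1 _ _ _ φd _ _ _ _ (R.LP_right b) (by rw [R.wt_opp]; omega) d1
    (inv_mem hy) (inv_mem hd))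
  have := mul_mem hyF h
  convert this using 1
  simp only [commutatorElement_def]; group

theorem comm_le {Q : Subgroup G} [Q.Normal] {a b c : F} (hX : ∀ γ, R.X c γ ≤ Q)
    (hL : R.LP a b c)
    (hY : ∀ γ, ∀ x ∈ R.X a γ, ∀ y ∈ R.X b (R.opp γ), ⁅x, y⁆ ∈ Q) :
    ⁅R.Eu a, R.Eu b⁆ ≤ Q := by
  have cF : ∀ x ∈ R.Fu a, R.Fu b ≤ Cn Q x := by
    intro x hx y hy
    rw [mem_Cn_symm]
    revert hx x
    change R.Fu a ≤ _
    refine (Subgroup.closure_le _).2 ?_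
    rintro x ⟨γ, hx⟩
    exact mem_Cn_symm.1 (R.comm_gen hX hL hx (hY γ x hx) hy)
  have good : ∀ α, ∀ x' ∈ R.X b α, ∀ z ∈ R.X R.top (R.opp α), ∀ φ, ∀ γ, R.wt φ α = 0 →
      0 < R.wt φ γ → ∀ x ∈ R.X a γ, x ∈ Cn Q (z * x' * z⁻¹) := by
    intro α x' hx' z hz φ γ h0 h1 x hx
    rw [mem_Cn_symm, mem_Cn_conj]
    refine cF _ (R.U_le_Fu φ _ ?_) (R.X_le_Fu _ _ hx')
    have := R.U_conj_gen (b := a) (φ := φ) (inv_mem hz) (by rw [R.wt_opp]; omega) (R.X_le_U _ h1 hx)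
    simpa using this
  have cZ : ∀ y ∈ R.Gz b, ∀ x ∈ R.Fu a, x ∈ Cn Q y := by
    intro y hy x hx
    rw [mem_Cn_symm]
    revert hy y
    change R.Gz b ≤ _
    refine (Subgroup.closure_le _).2 ?_
    rintro y (⟨α, hy⟩ | ⟨α, x', hx', z, hz, rfl⟩)
    · exact cF x hx (R.X_le_Fu _ _ hy)
    · refine mem_Cn_symm.1 ?_
      revert hx x
      change R.Fu a ≤ _
      refine (Subgroup.closure_le _).2 ?_
      rintro x ⟨β, hx⟩
      rcases R.dich α β with ⟨φ, h0, h1⟩ | ⟨_, h, _⟩ | ⟨h1, h, _⟩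
      · exact good α x' hx' z hz φ β h0 h1 x hx
      · rw [← h] at hx
        obtain ⟨γ, δ, σ, hD⟩ := R.dec_exists α
        obtain ⟨d, hd, g, hg, s, hs, e⟩ := R.dec_eq _ _ _ _ hD _ x hx
        obtain ⟨φs, s0, s1⟩ := R.dec_as _ _ _ _ hD
        obtain ⟨φg, g0, g1⟩ := R.dec_ag _ _ _ _ hD
        obtain ⟨φd, d0, d1⟩ := R.dec_ad _ _ _ _ hD
        have cg := good α x' hx' z hz φg γ g0 g1 g hg
        have cs := good α x' hx' z hz φs σ s0 s1 s hs
        obtain ⟨f, hf, ef⟩ := R.Z_conj hx' hz (inv_mem hd) d0 d1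
        have e' : x = d * g * d⁻¹ * g⁻¹ * s := by rw [e, commutatorElement_def]
        rw [e']
        refine mul_mem (mul_mem ?_ (inv_mem cg)) cs
        rw [mem_Cn_conj, mem_Cn_symm]
        rw [inv_inv] at ef
        rw [ef]
        exact mul_mem (mem_Cn_symm.1 cg) (cF g (R.X_le_Fu _ _ hg) (R.U_le_Fu _ _ hf))
      · rw [← h] at hx
        refine mem_Cn_symm.1 (mem_Cn_conj.2 ?_)
        have : z⁻¹ * x * z = x := by
          rw [mul_assoc, (R.C0 _ _ _ _ _ hx hz).eq, inv_mul_cancel_left]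
        rw [this]
        exact cF x (R.X_le_Fu _ _ hx) (R.X_le_Fu _ _ hx')
  rw [Subgroup.commutator_le]
  intro x hx y hy
  -- the set of all elements commuting with `Eu b`
  let M : Subgroup G := ⨅ y : R.Eu b, Cn Q (y : G)
  have hM : M.Normal := by
    refine ⟨fun n hn g => ?_⟩
    simp only [M, Subgroup.mem_iInf] at hn ⊢
    intro y
    rw [mem_Cn_conj]
    have := hn ⟨g⁻¹ * y * g⁻¹⁻¹, Subgroup.Normal.conj_mem inferInstance _ y.2 _⟩
    simpa using this
  have : R.Eu a ≤ M := by
    refine Subgroup.normalClosure_le_normal ?_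
    rintro x ⟨γ, hx⟩
    simp only [M, Subgroup.coe_iInf, Set.mem_iInter]
    intro y
    exact cZ y (R.Eu_le_Gz _ y.2) x (R.X_le_Fu _ _ hx)
  have := this hx
  simp only [M, Subgroup.mem_iInf] at this
  exact mem_Cn_symm.1 (this ⟨y, hy⟩)

theorem X_le_Eu (b : F) (α : Φ) : R.X b α ≤ R.Eu b := (R.X_le_Fu b α).trans (R.Fu_le_Eu b)

theorem U_comm_mod {Q : Subgroup G} [Q.Normal] {a b c : F} (hX : ∀ γ, R.X c γ ≤ Q)
    (hL : R.LP a b c) {φ : W} {β : Φ} {y : G} (hy : y ∈ R.X b β) (h : 0 ≤ R.wt φ β) :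
    R.U φ a ≤ Cn Q y := by
  refine (Subgroup.closure_le _).2 ?_
  rintro x ⟨γ, hγ, hx⟩
  exact R.U_le_of hX φ (R.C1 _ _ _ φ β γ y x (R.LP_symm _ _ _ hL) h hγ hy hx)

theorem U_U_comm_mod {Q : Subgroup G} [Q.Normal] {a b c : F} (hX : ∀ γ, R.X c γ ≤ Q)
    (hL : R.LP a b c) {φ : W} {u v : G} (hu : u ∈ R.U φ a) (hv : v ∈ R.U φ b) :
    v ∈ Cn Q u := by
  revert hv v
  change R.U φ b ≤ _
  refine (Subgroup.closure_le _).2 ?_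
  rintro x ⟨γ, hγ, hx⟩
  exact mem_Cn_symm.1 (R.U_comm_mod hX hL hx hγ.le hu)

theorem Y_central {K : Subgroup G} [K.Normal] {a b c : F} (hX : ∀ γ, R.X c γ ≤ K)
    (hL : R.LP a b c) {α : Φ} {x y : G} (hx : x ∈ R.X a α) (hy : y ∈ R.X b (R.opp α)) (g : G) :
    ⁅⁅x, y⁆, g⁆ ∈ K := by
  have gen : ∀ φ β, R.wt φ α = 0 → 0 < R.wt φ β → ∀ t ∈ R.X R.top β, t ∈ Cn K ⁅x, y⁆ := by
    intro φ β h0 h1 t ht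
    have h0' : 0 ≤ R.wt φ (R.opp α) := by rw [R.wt_opp]; omega
    have hu : ⁅x⁻¹, t⁆ ∈ R.U φ a :=
      R.C1 _ _ _ φ _ _ _ _ (R.LP_right a) h0.ge h1 (inv_mem hx) ht
    have hv : ⁅y⁻¹, t⁆ ∈ R.U φ b :=
      R.C1 _ _ _ φ _ _ _ _ (R.LP_right b) h0' h1 (inv_mem hy) ht
    have uy := R.U_comm_mod hX hL hy h0' hu
    have vx := R.U_comm_mod hX (R.LP_symm _ _ _ hL) hx h0.ge hv
    have uv := R.U_U_comm_mod hX hL hu hv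
    have e : t * ⁅x, y⁆ * t⁻¹ = ⁅x * ⁅x⁻¹, t⁆, y * ⁅y⁻¹, t⁆⁆ := by
      simp only [commutatorElement_def]; group
    generalize ⁅x⁻¹, t⁆ = u at *
    generalize ⁅y⁻¹, t⁆ = v at *
    rw [mem_Cn, comm_iff] at uy vx uv
    rw [mem_Cn, comm_iff]
    have e2 : ((⁅x * u, y * v⁆ : G) : G ⧸ K) = (⁅x, y⁆ : G) := by
      have h1 : ((⁅x * u, y * v⁆ : G) : G ⧸ K) =
        ⁅(x : G ⧸ K) * u, (y : G ⧸ K) * v⁆ := rfl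
      have h2 : ((⁅x, y⁆ : G) : G ⧸ K) = ⁅(x : G ⧸ K), (y : G ⧸ K)⁆ := rfl
      rw [h1, h2, commutatorElement_def, commutatorElement_def]
      generalize (u : G ⧸ K) = u at *
      generalize (v : G ⧸ K) = v at *
      generalize (x : G ⧸ K) = x at *
      generalize (y : G ⧸ K) = y at *
      have s1 : x * v = v * x := vx.eq
      have s2 : u * v = v * u := uv.eq
      have s3 : u * y = y * u := uy.eq.symm
      have t1 : x * u * (y * v) = x * y * (v * u) := by
        rw [mul_assoc, ← mul_assoc u, s3, mul_assoc y, s2, ← mul_assoc x]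
      have t2 : y * v * (x * u) = y * x * (v * u) := by
        rw [mul_assoc, ← mul_assoc v, ← s1, mul_assoc x, ← mul_assoc y]
      calc x * u * (y * v) * (x * u)⁻¹ * (y * v)⁻¹
          = (x * u * (y * v)) * (y * v * (x * u))⁻¹ := by group
        _ = _ := by rw [t1, t2]; group
    rw [← e] at e2
    have h3 : (t : G ⧸ K) * (⁅x, y⁆ : G) * (t : G ⧸ K)⁻¹ = (⁅x, y⁆ : G) := e2
    exact (mul_inv_eq_iff_eq_mul.1 h3).symm
  have all : ∀ β, ∀ t ∈ R.X R.top β, t ∈ Cn K ⁅x, y⁆ := by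
    have bad : ∀ α', (∀ φ, R.wt φ α' = 0 → R.wt φ α = 0) →
        ∀ t ∈ R.X R.top α', t ∈ Cn K ⁅x, y⁆ := by
      intro α' h t ht
      obtain ⟨γ, δ, σ, hD⟩ := R.dec_exists α'
      obtain ⟨d, hd, g, hg, s, hs, e⟩ := R.dec_eq _ _ _ _ hD _ t ht
      obtain ⟨φs, s0, s1⟩ := R.dec_as _ _ _ _ hD
      obtain ⟨φg, g0, g1⟩ := R.dec_ag _ _ _ _ hD
      obtain ⟨φd, d0, d1⟩ := R.dec_ad _ _ _ _ hD
      have md := gen φd _ (h _ d0) d1 d hd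
      have mg := gen φg _ (h _ g0) g1 g hg
      have ms := gen φs _ (h _ s0) s1 s hs
      rw [e, commutatorElement_def]
      exact mul_mem (mul_mem (mul_mem (mul_mem md mg) (inv_mem md)) (inv_mem mg)) ms
    intro β t ht
    rcases R.dich α β with ⟨φ, h0, h1⟩ | ⟨hh, h, _⟩ | ⟨h1, h, _⟩
    · exact gen φ β h0 h1 t ht
    · exact bad β (fun φ h => by rw [hh, h]) t ht
    · refine bad β (fun φ h => ?_) t ht
      have := h1 φ; rw [R.wt_opp] at this; omega
  have : (⊤ : Subgroup G) ≤ Cn K ⁅x, y⁆ := by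
    rw [← R.gen]
    refine (Subgroup.closure_le _).2 ?_
    rintro t ⟨β, ht⟩
    exact all β t ht
  exact this (Subgroup.mem_top g)

theorem H_central {a b c : F} (hL : R.LP a b c) {h : G} (hh : h ∈ ⁅R.Eu a, R.Eu b⁆) (g : G) :
    ⁅h, g⁆ ∈ R.Eu c := by
  let M : Subgroup G := ⨅ g : G, Cn (R.Eu c) g
  have hM : M.Normal := by
    refine ⟨fun n hn g => ?_⟩
    simp only [M, Subgroup.mem_iInf] at hn ⊢
    intro y
    rw [mem_Cn_conj]
    exact hn _
  have : ⁅R.Eu a, R.Eu b⁆ ≤ M := by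
    refine R.comm_le (c := c) ?_ hL ?_
    · intro γ k hk
      simp only [M, Subgroup.mem_iInf]
      intro g
      rw [mem_Cn_symm, mem_Cn, commutatorElement_def, mul_assoc, mul_assoc, ← mul_assoc g]
      exact mul_mem (R.X_le_Eu _ _ hk)
        (Subgroup.Normal.conj_mem inferInstance _ (inv_mem (R.X_le_Eu _ _ hk)) _)
    · intro γ x hx y hy
      simp only [M, Subgroup.mem_iInf]
      intro g
      rw [mem_Cn_symm]
      exact R.Y_central (R.X_le_Eu c) hL hx hy g
  have := this hh
  simp only [M, Subgroup.mem_iInf] at this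
  exact mem_Cn_symm.1 (this g)

/-- key lemma -/
theorem key {a b c : F} (hL : R.LP a b c) (hK : R.Eu c ≤ ⁅R.Eu a, R.Eu b⁆)
    {N : Subgroup G} [N.Normal] {t : G} (hN : ∀ k ∈ R.Eu c, ⁅k, t⁆ ∈ N) (β : Φ)
    (ht : ∀ α, R.Dj α β → ∀ x ∈ R.X a α, ∀ y ∈ R.X b (R.opp α), Commute ⁅x, y⁆ t) :
    ∀ h ∈ ⁅R.Eu a, R.Eu b⁆, ⁅h, t⁆ ∈ N := by
  let M : Subgroup G := ⁅R.Eu a, R.Eu b⁆ ⊓ Cn N t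
  have hKM : R.Eu c ≤ M := le_inf hK (fun k hk => mem_Cn_symm.1 (hN k hk))
  have hM : M.Normal := by
    refine ⟨fun n hn g => ?_⟩
    have h1 := R.H_central hL hn.1 g
    have h2 : g * n * g⁻¹ = n * ⁅n⁻¹, g⁆ := by simp only [commutatorElement_def]; group
    rw [h2]
    exact mul_mem hn (hKM (R.H_central hL (inv_mem hn.1) g))
  have hc : ∀ γ, R.X c γ ≤ M := fun γ => (R.X_le_Eu c γ).trans hKM
  have : ⁅R.Eu a, R.Eu b⁆ ≤ M := by
    refine R.comm_le hc hL ?_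
    refine R.move β _ ?_ ?_
    · intro α hα x hx y hy
      refine ⟨Subgroup.commutator_mem_commutator (R.X_le_Eu _ _ hx) (R.X_le_Eu _ _ hy), ?_⟩
      refine mem_Cn_symm.1 ?_
      rw [mem_Cn, commutatorElement_eq_one_iff_commute.2 (ht α hα x hx y hy)]
      exact one_mem _
    · intro α γ δ σ hD hγ hσ
      exact R.S_step hc hL hD hγ hσ
  intro h hh
  exact mem_Cn_symm.1 (this hh).2

theorem commute_comm {x y t : G} (h1 : Commute x t) (h2 : Commute y t) : Commute ⁅x, y⁆ t := by
  rw [commutatorElement_def]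
  exact ((h1.mul_left h2).mul_left h1.inv_left).mul_left h2.inv_left

theorem triple {a b c : F} (hL : R.LP a b c) (hK : R.Eu c ≤ ⁅R.Eu a, R.Eu b⁆) (e : F) :
    ⁅⁅R.Eu a, R.Eu b⁆, R.Eu e⁆ = ⁅R.Eu c, R.Eu e⁆ := by
  refine le_antisymm ?_ (Subgroup.commutator_mono hK le_rfl)
  set N := ⁅R.Eu c, R.Eu e⁆ with hN
  rw [Subgroup.commutator_le]
  intro h hh t ht
  let M : Subgroup G := ⨅ y : (⁅R.Eu a, R.Eu b⁆ : Subgroup G), Cn N (y : G)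
  have hM : M.Normal := by
    refine ⟨fun n hn g => ?_⟩
    simp only [M, Subgroup.mem_iInf] at hn ⊢
    intro y
    rw [mem_Cn_conj]
    have := hn ⟨g⁻¹ * y * g⁻¹⁻¹, Subgroup.Normal.conj_mem inferInstance _ y.2 _⟩
    simpa using this
  have : R.Eu e ≤ M := by
    refine Subgroup.normalClosure_le_normal ?_
    rintro t ⟨β, ht⟩
    simp only [M, Subgroup.coe_iInf, Set.mem_iInter]
    intro y
    refine R.key hL hK (N := N) ?_ β ?_ y y.2
    · intro k hk
      exact Subgroup.commutator_mem_commutator hk (R.X_le_Eu _ _ ht)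
    · intro α hα x hx y hy
      exact commute_comm (R.dj α β hα _ _ _ _ (Or.inl hx) (Or.inl ht))
        (R.dj α β hα _ _ _ _ (Or.inr hy) (Or.inl ht))
  have := this ht
  simp only [M, Subgroup.mem_iInf] at this
  exact this ⟨h, hh⟩

theorem quad {a b c a' b' c' : F} (hL : R.LP a b c) (hK : R.Eu c ≤ ⁅R.Eu a, R.Eu b⁆)
    (hL' : R.LP a' b' c') (hK' : R.Eu c' ≤ ⁅R.Eu a', R.Eu b'⁆) :
    ⁅⁅R.Eu a, R.Eu b⁆, ⁅R.Eu a', R.Eu b'⁆⁆ = ⁅R.Eu c, R.Eu c'⁆ := by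
  refine le_antisymm ?_ (Subgroup.commutator_mono hK hK')
  have h1 := R.triple hL hK c'
  have h2 := R.triple hL' hK' c
  rw [Subgroup.commutator_comm, Subgroup.commutator_comm (R.Eu c')] at h2
  set N := ⁅R.Eu c, R.Eu c'⁆ with hN
  rw [Subgroup.commutator_le]
  intro h hh t ht
  let M : Subgroup G := ⨅ y : (⁅R.Eu a, R.Eu b⁆ : Subgroup G), Cn N (y : G)
  have hM : M.Normal := by
    refine ⟨fun n hn g => ?_⟩
    simp only [M, Subgroup.mem_iInf] at hn ⊢
    intro y
    rw [mem_Cn_conj]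
    have := hn ⟨g⁻¹ * y * g⁻¹⁻¹, Subgroup.Normal.conj_mem inferInstance _ y.2 _⟩
    simpa using this
  have : ⁅R.Eu a', R.Eu b'⁆ ≤ M := by
    refine R.comm_le (c := c') ?_ hL' ?_
    · intro γ k hk
      simp only [M, Subgroup.mem_iInf]
      intro y
      rw [mem_Cn, ← h1]
      exact Subgroup.commutator_mem_commutator y.2 (R.X_le_Eu _ _ hk)
    · intro β x' hx' y' hy'
      simp only [M, Subgroup.mem_iInf]
      intro y
      refine R.key hL hK (N := N) ?_ β ?_ y y.2
      · intro k hk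
        rw [← h2]
        exact Subgroup.commutator_mem_commutator hk
          (Subgroup.commutator_mem_commutator (R.X_le_Eu _ _ hx') (R.X_le_Eu _ _ hy'))
      · intro α hα x hx y hy
        refine commute_comm (commute_comm ?_ ?_).symm (commute_comm ?_ ?_).symm
        · exact (R.dj α β hα _ _ _ _ (Or.inl hx) (Or.inl hx')).symm
        · exact (R.dj α β hα _ _ _ _ (Or.inl hx) (Or.inr hy')).symm
        · exact (R.dj α β hα _ _ _ _ (Or.inr hy) (Or.inl hx')).symm
        · exact (R.dj α β hα _ _ _ _ (Or.inr hy) (Or.inr hy')).symm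
  have := this ht
  simp only [M, Subgroup.mem_iInf] at this
  exact this ⟨h, hh⟩

end RG
namespace Idx
variable {n : ℕ}
@[simp] theorem neg_neg' (i : Idx n) : neg (neg i) = i := neg_neg i
@[simp] theorem neg_inj (i j : Idx n) : neg i = neg j ↔ i = j := neg_injective.eq_iff
theorem neg_eq_comm (i j : Idx n) : neg i = j ↔ i = neg j :=
  ⟨fun h => by rw [← h, neg_neg], fun h => by rw [h, neg_neg]⟩
end Idx

namespace FormRingData
variable {A : Type*} [Ring A] {n : ℕ} (D : FormRingData A)

theorem bar_one : D.bar 1 = 1 := by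
  have h := D.bar_mul (D.bar 1) 1
  rw [mul_one, D.bar_bar, mul_one] at h
  exact h.symm

theorem lam_bar' : D.bar D.lam * D.lam = 1 := by rw [← D.lam_comm]; exact D.lam_bar

theorem blam_comm (a : A) : D.bar D.lam * a = a * D.bar D.lam := by
  have := congrArg D.bar (D.lam_comm (D.bar a))
  rw [D.bar_mul, D.bar_mul, D.bar_bar] at this
  exact this.symm

/-- `ν_i = λ^{-(ε(i)+1)/2}` -/
def nu (i : Idx n) : A := if i.2 then D.bar D.lam else 1
/-- inverse of `nu` -/
def nui (i : Idx n) : A := if i.2 then D.lam else 1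

theorem nu_comm (i : Idx n) (a : A) : D.nu i * a = a * D.nu i := by
  unfold nu; split_ifs
  · exact D.blam_comm a
  · simp
theorem nui_comm (i : Idx n) (a : A) : D.nui i * a = a * D.nui i := by
  unfold nui; split_ifs
  · exact D.lam_comm a
  · simp
theorem bar_nu (i : Idx n) : D.bar (D.nu i) = D.nui i := by
  unfold nu nui; split_ifs
  · exact D.bar_bar _
  · exact D.bar_one
theorem bar_nui (i : Idx n) : D.bar (D.nui i) = D.nu i := by
  rw [← D.bar_nu, D.bar_bar]
theorem nu_nui (i : Idx n) : D.nu i * D.nui i = 1 := by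
  unfold nu nui; split_ifs
  · exact D.lam_bar'
  · simp
theorem nui_nu (i : Idx n) : D.nui i * D.nu i = 1 := by
  rw [D.nui_comm, D.nu_nui]
theorem lam_nu (i : Idx n) : D.lam * D.nu i = D.nui (Idx.neg i) := by
  unfold nu nui Idx.neg; cases i.2 <;> simp [D.lam_bar]
theorem nui_nui (i : Idx n) : D.nui i * D.nui (Idx.neg i) = D.lam := by
  unfold nui Idx.neg; cases i.2 <;> simp
theorem nu_nu (i : Idx n) : D.nu i * D.nu (Idx.neg i) = D.bar D.lam := by
  unfold nu Idx.neg; cases i.2 <;> simp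

theorem lpow_long (i : Idx n) : D.lpow (-(Idx.eps i + 1) / 2) = D.nu i := by
  unfold lpow nu Idx.eps; cases i.2 <;> simp
theorem lpow_short (i j : Idx n) : D.lpow ((Idx.eps j - Idx.eps i) / 2) = D.nu i * D.nui j := by
  unfold lpow nu nui Idx.eps; cases i.2 <;> cases j.2 <;> simp [D.lam_bar']

/-- The elementary generator, uniformly parametrised. -/
def el (i j : Idx n) (c : A) : GLn A n :=
  if j = Idx.neg i then D.TL i (D.nu i * c) else D.TS i j c

/-- the nilpotent part of `el` -/
def elm (i j : Idx n) (c : A) : Matrix (Idx n) (Idx n) A :=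
  if j = Idx.neg i then Matrix.single i (Idx.neg i) (D.nu i * c)
  else Matrix.single i j c - Matrix.single (Idx.neg j) (Idx.neg i) (D.nu i * D.nui j * D.bar c)

theorem el_val {i j : Idx n} (h : i ≠ j) (c : A) : (D.el i j c).val = 1 + D.elm i j c := by
  unfold el elm; split_ifs with h1
  · rfl
  · unfold TS; rw [dif_neg h]; simp only [Xmat, D.lpow_short]

theorem elm_short {i j : Idx n} (h : j ≠ Idx.neg i) (c : A) : D.elm i j c =
    Matrix.single i j c - Matrix.single (Idx.neg j) (Idx.neg i) (D.nu i * D.nui j * D.bar c) :=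
  if_neg h
theorem elm_long (i : Idx n) (c : A) : D.elm i (Idx.neg i) c =
    Matrix.single i (Idx.neg i) (D.nu i * c) := if_pos rfl

theorem single_mul' (i j k l : Idx n) (a b : A) :
    Matrix.single i j a * Matrix.single k l b = if j = k then Matrix.single i l (a * b) else 0 := by
  split_ifs with h
  · subst h; simp
  · exact Matrix.single_mul_single_of_ne _ _ _ _ h _

theorem elm_form (i j : Idx n) (c : A) : ∃ p q, D.elm i j c =
    Matrix.single i j p + Matrix.single (Idx.neg j) (Idx.neg i) q := by
  unfold elm; split_ifs with h
  · subst h; exact ⟨_, 0, by simp; rfl⟩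
  · exact ⟨c, -(D.nu i * D.nui j * D.bar c), by rw [stdBasisMatrix_neg', sub_eq_add_neg]⟩

theorem elm_mul_zero {i j k l : Idx n} (h1 : j ≠ k) (h2 : j ≠ Idx.neg l) (h3 : i ≠ Idx.neg k)
    (h4 : i ≠ l) (c d : A) : D.elm i j c * D.elm k l d = 0 := by
  obtain ⟨p, q, e⟩ := D.elm_form i j c
  obtain ⟨p', q', e'⟩ := D.elm_form k l d
  have h3' : Idx.neg i ≠ k := by rwa [Ne, Idx.neg_eq_comm]
  rw [e, e']
  simp [add_mul, mul_add, single_mul', h1, h2, h3', h4]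

theorem elm_add (i j : Idx n) (c d : A) : D.elm i j (c + d) = D.elm i j c + D.elm i j d := by
  unfold elm; split_ifs
  · rw [mul_add, Matrix.single_add]
  · rw [map_add, mul_add, Matrix.single_add, Matrix.single_add]; abel

theorem el_add {i j : Idx n} (h : i ≠ j) (c d : A) : D.el i j (c + d) = D.el i j c * D.el i j d := by
  apply Units.ext
  rw [Units.val_mul, D.el_val h, D.el_val h, D.el_val h, D.elm_add, add_mul, mul_add, mul_add,
    D.elm_mul_zero h.symm (Idx.neg_ne j).symm (Idx.neg_ne i).symm h]
  simp [add_assoc, add_comm]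

theorem el_zero {i j : Idx n} (h : i ≠ j) : D.el i j 0 = (1 : GLn A n) := by
  have := D.el_add h 0 0
  rw [add_zero] at this
  exact (left_eq_mul.1 this)

theorem el_neg {i j : Idx n} (h : i ≠ j) (c : A) : D.el i j (-c) = (D.el i j c)⁻¹ := by
  rw [eq_inv_iff_mul_eq_one, ← D.el_add h, neg_add_cancel, D.el_zero h]

theorem el_commute {i j k l : Idx n} (h : i ≠ j) (h' : k ≠ l) (h1 : j ≠ k) (h2 : j ≠ Idx.neg l)
    (h3 : i ≠ Idx.neg k) (h4 : i ≠ l) (c d : A) : Commute (D.el i j c) (D.el k l d) := by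
  apply Units.ext
  have h2' : l ≠ Idx.neg j := by rw [Ne, eq_comm, Idx.neg_eq_comm]; exact h2
  have h3' : k ≠ Idx.neg i := by rw [Ne, eq_comm, Idx.neg_eq_comm]; exact h3
  rw [Units.val_mul, Units.val_mul, D.el_val h, D.el_val h', add_mul, mul_add, mul_add, add_mul,
    mul_add, mul_add, D.elm_mul_zero h1 h2 h3 h4, D.elm_mul_zero h4.symm h2' h3' h1.symm]
  simp only [mul_one, one_mul, add_zero]
  abel

theorem el_dual {i j : Idx n} (h : i ≠ j) (hs : j ≠ Idx.neg i) (c : A) :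
    D.el i j c = D.el (Idx.neg j) (Idx.neg i) (-(D.nu i * D.nui j * D.bar c)) := by
  apply Units.ext
  have h' : Idx.neg j ≠ Idx.neg i := by simpa using h.symm
  have hs' : Idx.neg i ≠ Idx.neg (Idx.neg j) := by simpa using hs.symm
  rw [D.el_val h, D.el_val h', D.elm_short hs, D.elm_short hs']
  have : D.nu (Idx.neg j) * D.nui (Idx.neg i) * D.bar (-(D.nu i * D.nui j * D.bar c)) = - c := by
    have e1 : D.nu (Idx.neg j) * D.nui (Idx.neg i) * (D.nu j * D.nui i) = 1 := by
      unfold nu nui Idx.neg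
      cases i.2 <;> cases j.2 <;> simp [D.lam_bar, D.lam_bar']
    have e2 : c * (D.nu j * D.nui i) = D.nu j * D.nui i * c := by
      rw [mul_assoc, D.nui_comm, ← mul_assoc, ← mul_assoc, D.nu_comm]
    rw [map_neg, D.bar_mul, D.bar_mul, D.bar_bar, D.bar_nu, D.bar_nui, mul_neg, e2,
      ← mul_assoc, e1, one_mul]
  rw [this]
  simp only [Idx.neg_neg, stdBasisMatrix_neg']
  abel
end FormRingData
namespace Idx
variable {n : ℕ}
theorem ne6 {i j : Idx n} (h : i ≠ j) (h' : i ≠ neg j) :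
    i ≠ j ∧ j ≠ i ∧ i ≠ neg j ∧ j ≠ neg i ∧ neg i ≠ j ∧ neg j ≠ i := by
  refine ⟨h, h.symm, h', ?_, ?_, h'.symm⟩
  · rw [Ne, eq_comm, neg_eq_comm]; exact h'
  · rw [Ne, neg_eq_comm]; exact h'
@[simp] theorem neg_eq_self (i : Idx n) : (neg i = i) ↔ False := iff_false_intro (neg_ne i)
@[simp] theorem eq_neg_self (i : Idx n) : (i = neg i) ↔ False := iff_false_intro (neg_ne i).symm
end Idx
namespace FormRingData
variable {A : Type*} [Ring A] {n : ℕ} (D : FormRingData A)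

theorem nn_comm (i j : Idx n) (a : A) : a * (D.nu i * D.nui j) = D.nu i * D.nui j * a := by
  rw [mul_assoc, D.nui_comm, ← mul_assoc, ← mul_assoc, D.nu_comm]

theorem cenmul (u a b : A) (i j : Idx n) :
    u * a * (D.nu i * D.nui j * b) = u * (D.nu i * D.nui j) * (a * b) := by
  rw [← mul_assoc, mul_assoc u a, D.nn_comm, ← mul_assoc, ← mul_assoc, ← mul_assoc, mul_assoc _ a b]

theorem el_a {i j l : Idx n} (h1 : i ≠ j) (h1' : i ≠ Idx.neg j) (h2 : j ≠ l) (h2' : j ≠ Idx.neg l)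
    (h3 : i ≠ l) (h3' : i ≠ Idx.neg l) (x y : A) :
    ⁅D.el i j x, D.el j l y⁆ = D.el i l (x * y) := by
  rw [commutatorElement_def, mul_inv_eq_iff_eq_mul, mul_inv_eq_iff_eq_mul]
  apply Units.ext
  obtain ⟨a1, a2, a3, a4, a5, a6⟩ := Idx.ne6 h1 h1'
  obtain ⟨b1, b2, b3, b4, b5, b6⟩ := Idx.ne6 h2 h2'
  obtain ⟨c1, c2, c3, c4, c5, c6⟩ := Idx.ne6 h3 h3'
  have e : D.nu j * D.nui l * D.bar y * (D.nu i * D.nui j * D.bar x)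
      = D.nu i * D.nui l * D.bar (x * y) := by
    rw [D.bar_mul, D.cenmul]
    congr 1
    unfold nu nui
    cases i.2 <;> cases j.2 <;> cases l.2 <;>
      simp [D.lam_bar, D.lam_bar', mul_assoc, D.lam_comm (D.bar D.lam)]
  simp only [Units.val_mul]
  rw [D.el_val h1, D.el_val h2, D.el_val h3, D.elm_short a4, D.elm_short b4, D.elm_short c4]
  simp only [add_mul, mul_add, sub_mul, mul_sub, one_mul, mul_one, single_mul', ite_true, if_neg,
    Idx.neg_inj, a1, a2, a3, a4, a5, a6, b1, b2, b3, b4, b5, b6, c1, c2, c3, c4, c5, c6, ite_false,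
    Idx.neg_eq_self, Idx.eq_neg_self, e, zero_mul, mul_zero]
  abel

theorem el_b {i j : Idx n} (h1 : i ≠ j) (h1' : i ≠ Idx.neg j) (x y : A) :
    ⁅D.el i j x, D.el j (Idx.neg i) y⁆ = D.el i (Idx.neg i)
      (D.nui i * x * y - D.lam * D.bar (D.nui i * x * y)) := by
  rw [commutatorElement_def, mul_inv_eq_iff_eq_mul, mul_inv_eq_iff_eq_mul]
  apply Units.ext
  obtain ⟨a1, a2, a3, a4, a5, a6⟩ := Idx.ne6 h1 h1'
  have e : D.nu i * (D.nui i * x * y - D.lam * D.bar (D.nui i * x * y))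
     = x * y - D.nu j * D.nui (Idx.neg i) * D.bar y * (D.nu i * D.nui j * D.bar x) := by
    rw [mul_sub]
    congr 1
    · rw [← mul_assoc, ← mul_assoc, D.nu_nui, one_mul]
    rw [D.cenmul, mul_assoc _ x y, D.bar_mul (D.nui i), D.bar_mul x, D.bar_nui, ← D.nu_comm,
      ← mul_assoc, ← mul_assoc]
    congr 1
    unfold nu nui Idx.neg
    cases i.2 <;> cases j.2 <;>
      simp [D.lam_bar, D.lam_bar', mul_assoc, D.lam_comm (D.bar D.lam)]
  simp only [Units.val_mul]
  have hn : Idx.neg i ≠ Idx.neg j := by simpa using h1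
  rw [D.el_val h1, D.el_val a4, D.el_val (Idx.neg_ne i).symm, D.elm_short a4, D.elm_short hn,
    D.elm_long, e]
  simp only [add_mul, mul_add, sub_mul, mul_sub, one_mul, mul_one, single_mul', ite_true, if_neg,
    Idx.neg_inj, a1, a2, a3, a4, a5, a6, ite_false, sub_eq_add_neg, stdBasisMatrix_neg',
    Matrix.single_add, neg_mul, mul_neg, Idx.neg_neg',
    Idx.neg_eq_self, Idx.eq_neg_self, e, zero_mul, mul_zero]
  abel

theorem el_d {i j : Idx n} (h1 : i ≠ j) (h1' : i ≠ Idx.neg j) (x g : A) 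
    (hg : g = -(D.lam * D.bar g)) :
    ⁅D.el i j x, D.el j (Idx.neg j) g⁆ = D.el i (Idx.neg j) (D.nu j * x * g) *
      D.el i (Idx.neg i) (x * g * D.bar x) := by
  rw [commutatorElement_def, mul_inv_eq_iff_eq_mul, mul_inv_eq_iff_eq_mul]
  apply Units.ext
  obtain ⟨a1, a2, a3, a4, a5, a6⟩ := Idx.ne6 h1 h1'
  have e1 : x * (D.nu j * g) = D.nu j * x * g := by rw [← mul_assoc, D.nu_comm]
  have e2 : D.nu j * g * (D.nu i * D.nui j * D.bar x) =
      - (D.nu i * D.nui (Idx.neg j) * D.bar (D.nu j * x * g)) := by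
    conv_lhs => rw [hg]
    rw [D.cenmul, mul_assoc _ x g, D.bar_mul (D.nu j), D.bar_mul x, D.bar_nu,
      ← D.nui_comm j (D.bar g * D.bar x), neg_mul, mul_neg, mul_assoc D.lam, ← mul_assoc _ D.lam,
      ← mul_assoc _ (D.nui j) (D.bar g * D.bar x)]
    congr 2
    unfold nu nui Idx.neg
    cases i.2 <;> cases j.2 <;>
      simp [D.lam_bar, D.lam_bar', mul_assoc, D.lam_comm (D.bar D.lam)]
  have e3 : D.nu j * x * g * (D.nu i * D.nui j * D.bar x) = D.nu i * (x * g * D.bar x) := by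
    rw [mul_assoc (D.nu j), D.cenmul]
    congr 1
    unfold nu nui
    cases i.2 <;> cases j.2 <;>
      simp [D.lam_bar, D.lam_bar', mul_assoc, D.lam_comm (D.bar D.lam)]
  simp only [Units.val_mul]
  have hn : Idx.neg j ≠ Idx.neg i := by simpa using h1.symm
  rw [D.el_val h1, D.el_val (Idx.neg_ne j).symm, D.el_val a3, D.el_val (Idx.neg_ne i).symm,
    D.elm_short a4, D.elm_short hn, D.elm_long, D.elm_long, ]
  simp only [add_mul, mul_add, sub_mul, mul_sub, one_mul, mul_one, single_mul', ite_true, if_neg,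
    Idx.neg_inj, a1, a2, a3, a4, a5, a6, ite_false, sub_eq_add_neg, stdBasisMatrix_neg',
    Matrix.single_add, neg_mul, mul_neg, Idx.neg_neg',
    Idx.neg_eq_self, Idx.eq_neg_self, e1, e2, e3, zero_mul, mul_zero]
  abel
end FormRingData
namespace FormRingData
variable {A : Type*} [Ring A] {n : ℕ} (D : FormRingData A)

theorem symI_le {S T K : AddSubgroup A} (h1 : ∀ a ∈ S, ∀ b ∈ T, a * b ∈ K)
    (h2 : ∀ a ∈ S, ∀ b ∈ T, b * a ∈ K) : symI S T ≤ K := by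
  refine sup_le ((AddSubgroup.closure_le _).2 ?_) ((AddSubgroup.closure_le _).2 ?_)
  · rintro _ ⟨a, ha, b, hb, rfl⟩; exact h1 a ha b hb
  · rintro _ ⟨b, hb, a, ha, rfl⟩; exact h2 a ha b hb

theorem mem_symI_left {S T : AddSubgroup A} {a b : A} (ha : a ∈ S) (hb : b ∈ T) :
    a * b ∈ symI S T :=
  (le_sup_left : _ ≤ symI S T) (AddSubgroup.subset_closure ⟨a, ha, b, hb, rfl⟩)
theorem mem_symI_right {S T : AddSubgroup A} {a b : A} (ha : a ∈ S) (hb : b ∈ T) :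
    b * a ∈ symI S T :=
  (le_sup_right : _ ≤ symI S T) (AddSubgroup.subset_closure ⟨b, hb, a, ha, rfl⟩)

theorem gammaMin_le' {K L : AddSubgroup A} (h1 : ∀ a ∈ K, a - D.lam * D.bar a ∈ L)
    (h2 : ∀ a ∈ K, ∀ c ∈ D.Lambda, a * c * D.bar a ∈ L) : D.gammaMin K ≤ L := by
  refine (AddSubgroup.closure_le _).2 ?_
  rintro _ (⟨a, ha, rfl⟩ | ⟨a, ha, c, hc, rfl⟩)
  · exact h1 a ha
  · exact h2 a ha c hc
theorem conjPar_le' {S Γ L : AddSubgroup A} (h : ∀ b ∈ S, ∀ g ∈ Γ, b * g * D.bar b ∈ L) :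
    D.conjPar S Γ ≤ L := by
  refine (AddSubgroup.closure_le _).2 ?_
  rintro _ ⟨a, ha, c, hc, rfl⟩
  exact h a ha c hc
theorem gammaMin_mem1 {K : AddSubgroup A} {a : A} (h : a ∈ K) :
    a - D.lam * D.bar a ∈ D.gammaMin K := AddSubgroup.subset_closure (Or.inl ⟨a, h, rfl⟩)
theorem gammaMin_mem2 {K : AddSubgroup A} {a c : A} (h : a ∈ K) (hc : c ∈ D.Lambda) :
    a * c * D.bar a ∈ D.gammaMin K := AddSubgroup.subset_closure (Or.inr ⟨a, h, c, hc, rfl⟩)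
theorem conjPar_mem {S Γ : AddSubgroup A} {b g : A} (hb : b ∈ S) (hg : g ∈ Γ) :
    b * g * D.bar b ∈ D.conjPar S Γ := AddSubgroup.subset_closure ⟨b, hb, g, hg, rfl⟩
theorem symG_le {I Γ J Δ L : AddSubgroup A} (h1 : D.gammaMin (symI I J) ≤ L)
    (h2 : ∀ b ∈ J, ∀ g ∈ Γ, b * g * D.bar b ∈ L) (h3 : ∀ b ∈ I, ∀ g ∈ Δ, b * g * D.bar b ∈ L) :
    D.symG I Γ J Δ ≤ L :=
  sup_le (sup_le h1 (D.conjPar_le' h2)) (D.conjPar_le' h3)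
theorem symG_mem1 {I Γ J Δ : AddSubgroup A} : D.gammaMin (symI I J) ≤ D.symG I Γ J Δ :=
  le_sup_left.trans le_sup_left
theorem symG_mem2 {I Γ J Δ : AddSubgroup A} : D.conjPar J Γ ≤ D.symG I Γ J Δ :=
  le_sup_right.trans le_sup_left
theorem symG_mem3 {I Γ J Δ : AddSubgroup A} : D.conjPar I Δ ≤ D.symG I Γ J Δ :=
  le_sup_right

/-- `x ↦ c x c̄` -/
def cj (c : A) : A →+ A := (AddMonoidHom.mulRight (D.bar c)).comp (AddMonoidHom.mulLeft c)
theorem cj_apply (c x : A) : D.cj c x = c * x * D.bar c := rfl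
theorem cj_conj (c b g : A) : D.cj c (b * g * D.bar b) = (c * b) * g * D.bar (c * b) := by
  rw [D.cj_apply, D.bar_mul]; simp only [mul_assoc]
theorem cj_min (c a : A) : D.cj c (a - D.lam * D.bar a) =
    (c * a * D.bar c) - D.lam * D.bar (c * a * D.bar c) := by
  rw [D.cj_apply, D.bar_mul, D.bar_mul, D.bar_bar, mul_sub, sub_mul, ← mul_assoc c D.lam,
    ← D.lam_comm]
  simp only [mul_assoc]

theorem lam_max {g : A} (h : g ∈ D.Lambda) : g = -(D.lam * D.bar g) := D.lambdaMax_mem g h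

variable {D}
/-- the unit form ideal -/
def topFI (D : FormRingData A) : FormIdeal D where
  I := ⊤
  Gamma := D.Lambda
  mul_mem_left := by simp
  mul_mem_right := by simp
  bar_mem := by simp
  gammaMin_le := D.gammaMin_le' (fun a _ => D.lambdaMin_mem a) (fun a _ c hc => D.lambda_conj a c hc)
  gamma_le_I := le_top
  gamma_le_Lambda := le_rfl
  gamma_conj := D.lambda_conj

/-- symmetrised product -/
def prodFI (a b : FormIdeal D) : FormIdeal D :=
  have hl : ∀ (c : A), ∀ x ∈ symI a.I b.I, c * x ∈ symI a.I b.I := fun c => by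
    refine symI_le (K := (symI a.I b.I).comap (AddMonoidHom.mulLeft c)) ?_ ?_
    · intro x hx y hy
      show c * (x * y) ∈ symI a.I b.I
      rw [← mul_assoc]; exact mem_symI_left (a.mul_mem_left c x hx) hy
    · intro x hx y hy
      show c * (y * x) ∈ symI a.I b.I
      rw [← mul_assoc]; exact mem_symI_right hx (b.mul_mem_left c y hy)
  have hr : ∀ (c : A), ∀ x ∈ symI a.I b.I, x * c ∈ symI a.I b.I := fun c => by
    refine symI_le (K := (symI a.I b.I).comap (AddMonoidHom.mulRight c)) ?_ ?_
    · intro x hx y hy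
      show (x * y) * c ∈ symI a.I b.I
      rw [mul_assoc]; exact mem_symI_left hx (b.mul_mem_right c y hy)
    · intro x hx y hy
      show (y * x) * c ∈ symI a.I b.I
      rw [mul_assoc]; exact mem_symI_right (a.mul_mem_right c x hx) hy
  have hb : ∀ x ∈ symI a.I b.I, D.bar x ∈ symI a.I b.I := by
    refine symI_le (K := (symI a.I b.I).comap D.bar) ?_ ?_
    · intro x hx y hy
      show D.bar (x * y) ∈ symI a.I b.I
      rw [D.bar_mul]; exact mem_symI_right (a.bar_mem x hx) (b.bar_mem y hy)
    · intro x hx y hy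
      show D.bar (y * x) ∈ symI a.I b.I
      rw [D.bar_mul]; exact mem_symI_left (a.bar_mem x hx) (b.bar_mem y hy)
  { I := symI a.I b.I
    Gamma := D.symG a.I a.Gamma b.I b.Gamma
    mul_mem_left := hl
    mul_mem_right := hr
    bar_mem := hb
    gammaMin_le := D.symG_mem1
    gamma_le_I := by
      refine D.symG_le (D.gammaMin_le' ?_ ?_) ?_ ?_
      · intro x hx
        exact sub_mem hx (hl _ _ (hb _ hx))
      · intro x hx c _
        exact hr _ _ (hr _ _ hx)
      · intro y hy g hg
        exact hr _ _ (mem_symI_right (a.gamma_le_I hg) hy)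
      · intro y hy g hg
        exact hr _ _ (mem_symI_left hy (b.gamma_le_I hg))
    gamma_le_Lambda := by
      refine D.symG_le (D.gammaMin_le' ?_ ?_) ?_ ?_
      · intro x hx
        exact D.lambdaMin_mem x
      · intro x hx c hc
        exact D.lambda_conj x c hc
      · intro y hy g hg
        exact D.lambda_conj y g (a.gamma_le_Lambda hg)
      · intro y hy g hg
        exact D.lambda_conj y g (b.gamma_le_Lambda hg)
    gamma_conj := by
      intro c
      show D.symG a.I a.Gamma b.I b.Gamma ≤ (D.symG a.I a.Gamma b.I b.Gamma).comap (D.cj c)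
      refine D.symG_le (D.gammaMin_le' ?_ ?_) ?_ ?_
      · intro x hx
        rw [AddSubgroup.mem_comap, D.cj_min]
        exact D.symG_mem1 (D.gammaMin_mem1 (hr _ _ (hl _ _ hx)))
      · intro x hx d hd
        rw [AddSubgroup.mem_comap, D.cj_conj]
        exact D.symG_mem1 (D.gammaMin_mem2 (hl _ _ hx) hd)
      · intro y hy g hg
        rw [AddSubgroup.mem_comap, D.cj_conj]
        exact D.symG_mem2 (D.conjPar_mem (b.mul_mem_left _ _ hy) hg)
      · intro y hy g hg
        rw [AddSubgroup.mem_comap, D.cj_conj]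
        exact D.symG_mem3 (D.conjPar_mem (a.mul_mem_left _ _ hy) hg) }

/-- the levels multiply -/
structure LPr (a b c : FormIdeal D) : Prop where
  ab : ∀ x ∈ a.I, ∀ y ∈ b.I, x * y ∈ c.I
  ba : ∀ x ∈ a.I, ∀ y ∈ b.I, y * x ∈ c.I
  ag : ∀ x ∈ a.I, ∀ g ∈ b.Gamma, x * g * D.bar x ∈ c.Gamma
  bg : ∀ y ∈ b.I, ∀ g ∈ a.Gamma, y * g * D.bar y ∈ c.Gamma

theorem LPr.symm {a b c : FormIdeal D} (h : LPr a b c) : LPr b a c :=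
  ⟨fun x hx y hy => h.ba y hy x hx, fun x hx y hy => h.ab y hy x hx, h.bg, h.ag⟩
theorem LPr_top (a : FormIdeal D) : LPr (topFI D) a a :=
  ⟨fun x _ y hy => a.mul_mem_left x y hy, fun x _ y hy => a.mul_mem_right x y hy,
   fun x _ g hg => a.gamma_conj x g hg,
   fun y hy g hg => a.gammaMin_le (D.gammaMin_mem2 hy hg)⟩
theorem LPr_prod (a b : FormIdeal D) : LPr a b (prodFI a b) :=
  ⟨fun x hx y hy => mem_symI_left hx hy, fun x hx y hy => mem_symI_right hx hy,
   fun x hx g hg => D.symG_mem3 (D.conjPar_mem hx hg),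
   fun x hx g hg => D.symG_mem2 (D.conjPar_mem hx hg)⟩

/-- the level at a position -/
def lev (a : FormIdeal D) (i j : Idx n) : AddSubgroup A := if j = Idx.neg i then a.Gamma else a.I

theorem lev_long (a : FormIdeal D) (i : Idx n) : lev a i (Idx.neg i) = a.Gamma := if_pos rfl
theorem lev_short (a : FormIdeal D) {i j : Idx n} (h : j ≠ Idx.neg i) : lev a i j = a.I := if_neg h
theorem lev_le_top (a : FormIdeal D) (i j : Idx n) : lev a i j ≤ lev (topFI D) i j := by
  unfold lev; split_ifs
  · exact a.gamma_le_Lambda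
  · exact le_top

theorem lev_dual (a : FormIdeal D) {k l : Idx n} (h : k ≠ l) {d : A} (hd : d ∈ lev a k l) :
    ∃ d' ∈ lev a (Idx.neg l) (Idx.neg k), D.el k l d = D.el (Idx.neg l) (Idx.neg k) d' := by
  by_cases hs : l = Idx.neg k
  · subst hs
    rw [Idx.neg_neg']
    exact ⟨d, hd, rfl⟩
  · refine ⟨_, ?_, D.el_dual h hs d⟩
    rw [lev_short a hs] at hd
    have hs' : Idx.neg k ≠ Idx.neg (Idx.neg l) := by simpa using fun h => hs h.symm
    rw [lev_short a hs']
    exact neg_mem (a.mul_mem_left _ _ (a.bar_mem _ hd))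

/-- unipotent radical type subgroups -/
def UG (φ : Idx n → ℤ) (c : FormIdeal D) : Subgroup (GLn A n) :=
  Subgroup.closure {x | ∃ i j : Idx n, i ≠ j ∧ 0 < φ i - φ j ∧ ∃ e ∈ lev c i j, x = D.el i j e}

theorem mem_UG {φ : Idx n → ℤ} {c : FormIdeal D} {i j : Idx n} (h : i ≠ j) (hp : 0 < φ i - φ j)
    {e : A} (he : e ∈ lev c i j) : D.el i j e ∈ UG φ c :=
  Subgroup.subset_closure ⟨i, j, h, hp, e, he, rfl⟩

theorem comp_long {φ : Idx n → ℤ} (hφ : ∀ i, φ (Idx.neg i) = - φ i) {a b c : FormIdeal D}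
    (hL : LPr a b c) {i j : Idx n} (h1 : i ≠ j) (h2 : i ≠ Idx.neg j) (w1 : 0 ≤ φ i - φ j)
    (w3 : 0 < φ i + φ j) {x g : A} (hx : x ∈ a.I) (hg : g ∈ b.Gamma) :
    ⁅D.el i j x, D.el j (Idx.neg j) g⁆ ∈ UG φ c := by
  rw [D.el_d h1 h2 x g (D.lam_max (b.gamma_le_Lambda hg))]
  refine mul_mem (mem_UG h2 ?_ ?_) (mem_UG (Idx.neg_ne i).symm ?_ ?_)
  · rw [hφ]; omega
  · rw [lev_short c (by simpa using h1.symm), mul_assoc]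
    exact c.mul_mem_left _ _ (hL.ab _ hx _ (b.gamma_le_I hg))
  · rw [hφ]; omega
  · rw [lev_long]; exact hL.ag _ hx _ hg

theorem comp {φ : Idx n → ℤ} (hφ : ∀ i, φ (Idx.neg i) = - φ i) {a b c : FormIdeal D}
    (hL : LPr a b c) {i j l : Idx n} (h1 : i ≠ j) (h2 : j ≠ l) (h3 : i ≠ l)
    (w1 : 0 ≤ φ i - φ j) (w2 : 0 ≤ φ j - φ l) (w3 : 0 < φ i - φ l) {x y : A}
    (hx : x ∈ lev a i j) (hy : y ∈ lev b j l) : ⁅D.el i j x, D.el j l y⁆ ∈ UG φ c := by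
  by_cases c1 : l = Idx.neg j
  · subst c1
    obtain ⟨a1, a2, a3, a4, a5, a6⟩ := Idx.ne6 h1 h3
    rw [lev_short a a4] at hx
    rw [lev_long] at hy
    rw [hφ] at w3
    exact comp_long hφ hL h1 h3 w1 (by omega) hx hy
  by_cases c2 : j = Idx.neg i
  · subst c2
    obtain ⟨y', hy', e⟩ := lev_dual b h2 hy
    obtain ⟨a1, a2, a3, a4, a5, a6⟩ := Idx.ne6 h3 (by rw [Ne, ← Idx.neg_eq_comm]; exact h2)
    rw [e]
    rw [Idx.neg_neg'] at hy' ⊢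
    rw [lev_short b (by simpa using a1)] at hy'
    rw [lev_long] at hx
    rw [← inv_mem_iff, commutatorElement_inv]
    rw [hφ] at w1 w2
    exact comp_long hφ hL.symm a6 (by simpa using a2) (by rw [hφ]; omega) (by rw [hφ]; omega) hy' hx
  rw [lev_short a c2] at hx
  rw [lev_short b c1] at hy
  have c2' : i ≠ Idx.neg j := by rw [Ne, ← Idx.neg_eq_comm]; exact fun h => c2 h.symm
  by_cases c3 : l = Idx.neg i
  · subst c3
    rw [D.el_b h1 c2']
    refine mem_UG h3 w3 ?_
    rw [lev_long]
    refine c.gammaMin_le (D.gammaMin_mem1 ?_)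
    rw [mul_assoc]; exact c.mul_mem_left _ _ (hL.ab _ hx _ hy)
  · have c1' : j ≠ Idx.neg l := by rw [Ne, ← Idx.neg_eq_comm]; exact fun h => c1 h.symm
    have c3' : i ≠ Idx.neg l := by rw [Ne, ← Idx.neg_eq_comm]; exact fun h => c3 h.symm
    rw [D.el_a h1 c2' h2 c1' h3 c3']
    refine mem_UG h3 w3 ?_
    rw [lev_short c c3]; exact hL.ab _ hx _ hy

theorem C1G {φ : Idx n → ℤ} (hφ : ∀ i, φ (Idx.neg i) = - φ i) {a b c : FormIdeal D}
    (hL : LPr a b c) {i j k l : Idx n} (h1 : i ≠ j) (h2 : k ≠ l)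
    (w1 : 0 ≤ φ i - φ j) (w2 : 0 < φ k - φ l) {x y : A}
    (hx : x ∈ lev a i j) (hy : y ∈ lev b k l) : ⁅D.el i j x, D.el k l y⁆ ∈ UG φ c := by
  have key : ∀ (k l : Idx n) (h2 : k ≠ l) (w2 : 0 < φ k - φ l) (y : A) (hy : y ∈ lev b k l),
      (j = k ∨ i = l) → ⁅D.el i j x, D.el k l y⁆ ∈ UG φ c := by
    rintro k l h2 w2 y hy (rfl | rfl)
    · refine comp hφ hL h1 h2 ?_ w1 w2.le (by omega) hx hy
      rintro rfl; omega
    · rw [← inv_mem_iff, commutatorElement_inv]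
      refine comp hφ hL.symm h2 h1 ?_ w2.le w1 (by omega) hy hx
      rintro rfl; omega
  by_cases c1 : j = k ∨ i = l
  · exact key k l h2 w2 y hy c1
  by_cases c2 : j = Idx.neg l ∨ i = Idx.neg k
  · obtain ⟨y', hy', e⟩ := lev_dual b h2 hy
    rw [e]
    exact key _ _ (by simpa using h2.symm) (by rw [hφ, hφ]; omega) y' hy' c2
  push Not at c1 c2
  rw [(commutatorElement_eq_one_iff_commute).2 (D.el_commute h1 h2 c1.1 c2.1 c2.2 c1.2 _ _)]
  exact one_mem _

end FormRingData
/-- roots -/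
abbrev Rt (n : ℕ) := {p : Idx n × Idx n // p.1 ≠ p.2}
/-- weights -/
abbrev Wt (n : ℕ) := {f : Idx n → ℤ // ∀ i, f (Idx.neg i) = - f i}

namespace Idx
variable {n : ℕ}
/-- indicator weight -/
def ind (k : Idx n) (x : Idx n) : ℤ := if x = k then 1 else if x = neg k then -1 else 0
theorem ind_self (k : Idx n) : ind k k = 1 := if_pos rfl
theorem ind_neg (k x : Idx n) : ind k (neg x) = - ind k x := by
  unfold ind
  by_cases h : x = k
  · subst h; simp
  · by_cases h' : x = neg k
    · subst h'; simp
    · have : neg x ≠ k := by rw [Ne, neg_eq_comm]; exact h'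
      simp [h, h', this]
theorem ind_zero {k x : Idx n} (h : x ≠ k) (h' : x ≠ neg k) : ind k x = 0 := by
  unfold ind; simp [h, h']
theorem ind_le {k x : Idx n} (h : x ≠ k) : ind k x ≤ 0 := by
  unfold ind; rw [if_neg h]; split_ifs <;> simp

/-- indicator as a weight -/
def indW (k : Idx n) : Wt n := ⟨ind k, ind_neg k⟩

theorem ne_of_fst {i j : Idx n} (h : i.1 ≠ j.1) : i ≠ j ∧ i ≠ neg j :=
  ⟨fun e => h (by rw [e]), fun e => h (by rw [e]; rfl)⟩

theorem indep {i j k l : Idx n} (hij : i ≠ j) (hkl : k ≠ l) (h1 : ¬ (k = i ∧ l = j))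
    (h2 : ¬ (k = neg j ∧ l = neg i)) (h3 : ¬ (k = j ∧ l = i)) (h4 : ¬ (k = neg i ∧ l = neg j)) :
    ∃ φ : Wt n, φ.1 i - φ.1 j = 0 ∧ 0 < φ.1 k - φ.1 l := by
  have out1 : k ≠ i → k ≠ neg i → k ≠ j → k ≠ neg j →
      ∃ φ : Wt n, φ.1 i - φ.1 j = 0 ∧ 0 < φ.1 k - φ.1 l := by
    intro a b c d
    obtain ⟨_, a, _, b, _⟩ := ne6 a b
    obtain ⟨_, c, _, d, _⟩ := ne6 c d
    refine ⟨indW k, ?_, ?_⟩ <;> simp only [indW]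
    · rw [ind_zero a b, ind_zero c d, sub_zero]
    · have := ind_le hkl.symm
      rw [ind_self]; omega
  have out2 : l ≠ i → l ≠ neg i → l ≠ j → l ≠ neg j →
      ∃ φ : Wt n, φ.1 i - φ.1 j = 0 ∧ 0 < φ.1 k - φ.1 l := by
    intro a b c d
    obtain ⟨_, a, _, b, _⟩ := ne6 a b
    obtain ⟨_, c, _, d, _⟩ := ne6 c d
    refine ⟨⟨fun x => - ind l x, fun x => by simp only [ind_neg]⟩, ?_, ?_⟩ <;> dsimp only
    · rw [ind_zero a b, ind_zero c d]; simp
    · have := ind_le hkl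
      rw [ind_self]; omega
  by_cases hl : j = neg i
  · subst hl
    by_cases k1 : k = i ∨ k = neg i
    · refine out2 ?_ ?_ ?_ ?_ <;> rintro rfl <;> rcases k1 with rfl | rfl <;> simp_all
    · push Not at k1
      exact out1 k1.1 k1.2 k1.2 (by simpa using k1.1)
  by_cases k1 : k ≠ i ∧ k ≠ neg i ∧ k ≠ j ∧ k ≠ neg j
  · exact out1 k1.1 k1.2.1 k1.2.2.1 k1.2.2.2
  by_cases l1 : l ≠ i ∧ l ≠ neg i ∧ l ≠ j ∧ l ≠ neg j
  · exact out2 l1.1 l1.2.1 l1.2.2.1 l1.2.2.2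
  have s1 : ind i j = 0 := ind_zero hij.symm hl
  have s2 : ind j i = 0 := ind_zero hij (fun e => hl (by rw [e, neg_neg]))
  have hf : ∀ x, ind i (neg x) + ind j (neg x) = - (ind i x + ind j x) := by
    intro x; rw [ind_neg, ind_neg]; ring
  let φ : Wt n := ⟨fun x => ind i x + ind j x, hf⟩
  let ψ : Wt n := ⟨fun x => - (ind i x + ind j x), fun x => by simp only [hf]⟩
  have e : (0 < φ.1 k - φ.1 l) ∨ (0 < ψ.1 k - ψ.1 l) := by
    have k1' : k = i ∨ k = neg i ∨ k = j ∨ k = neg j := by by_contra hh; push Not at hh; exact k1 hh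
    have l1' : l = i ∨ l = neg i ∨ l = j ∨ l = neg j := by by_contra hh; push Not at hh; exact l1 hh
    clear out1 out2 k1 l1
    have v1 : ind i i + ind j i = 1 := by rw [ind_self, s2, add_zero]
    have v2 : ind i j + ind j j = 1 := by rw [ind_self, s1, zero_add]
    have v3 := hf i
    have v4 := hf j
    rw [v1] at v3
    rw [v2] at v4
    simp only [φ, ψ]
    rcases k1' with ek | ek | ek | ek <;> rcases l1' with el | el | el | el <;>
    first
      | exact absurd (ek.trans el.symm) hkl
      | exact absurd (And.intro ek el) h1
      | exact absurd (And.intro ek el) h2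
      | exact absurd (And.intro ek el) h3
      | exact absurd (And.intro ek el) h4
      | (rw [ek, el]; omega)
  rcases e with e | e
  · exact ⟨φ, by simp [φ, ind_self, s1, s2], e⟩
  · exact ⟨ψ, by simp [ψ, ind_self, s1, s2], e⟩

theorem exists_out (hn : 4 ≤ n) (a b : Fin n) : ∃ g h : Fin n, g ≠ h ∧ g ≠ a ∧ g ≠ b ∧ h ≠ a ∧ h ≠ b := by
  have : 1 < (Finset.univ \ {a, b} : Finset (Fin n)).card := by
    have h1 := Finset.le_card_sdiff ({a, b} : Finset (Fin n)) Finset.univ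
    have h2 : ({a, b} : Finset (Fin n)).card ≤ 2 := Finset.card_le_two
    rw [Finset.card_univ, Fintype.card_fin] at h1
    omega
  obtain ⟨g, hg, h, hh, e⟩ := Finset.one_lt_card.1 this
  simp at hg hh
  exact ⟨g, h, e, hg.1, hg.2, hh.1, hh.2⟩
end Idx

/-- decompositions of roots -/
inductive DecR {n : ℕ} : Rt n → Rt n → Rt n → Rt n → Prop
  | s1 (i j k : Idx n) (h1 : i ≠ j) (h1' : i ≠ Idx.neg j) (h2 : i ≠ k) (h2' : i ≠ Idx.neg k)
      (h3 : k ≠ j) (h3' : k ≠ Idx.neg j) : DecR ⟨(i, j), h1⟩ ⟨(i, k), h2⟩ ⟨(k, j), h3⟩ ⟨(i, k), h2⟩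
  | s2 (i j k : Idx n) (h1 : i ≠ j) (h1' : i ≠ Idx.neg j) (h2 : i ≠ k) (h2' : i ≠ Idx.neg k)
      (h3 : k ≠ j) (h3' : k ≠ Idx.neg j) : DecR ⟨(i, j), h1⟩ ⟨(k, j), h3⟩ ⟨(i, k), h2⟩ ⟨(k, j), h3⟩
  | lg (i k : Idx n) (h2 : i ≠ k) (h2' : i ≠ Idx.neg k) :
      DecR ⟨(i, Idx.neg i), (Idx.neg_ne i).symm⟩ ⟨(k, Idx.neg k), (Idx.neg_ne k).symm⟩
        ⟨(i, k), h2⟩ ⟨(i, Idx.neg k), h2'⟩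

namespace Rt
variable {n : ℕ}
/-- weight -/
def wt (φ : Wt n) (p : Rt n) : ℤ := φ.1 p.1.1 - φ.1 p.1.2
/-- opposite root -/
def opp (p : Rt n) : Rt n := ⟨(p.1.2, p.1.1), p.2.symm⟩
/-- disjoint support -/
def Dj (p q : Rt n) : Prop := p.1.1.1 ≠ q.1.1.1 ∧ p.1.1.1 ≠ q.1.2.1 ∧ p.1.2.1 ≠ q.1.1.1 ∧ p.1.2.1 ≠ q.1.2.1

theorem dec_ag {α γ δ σ : Rt n} (h : DecR α γ δ σ) : ∃ φ, wt φ α = 0 ∧ 0 < wt φ γ := by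
  rcases h with ⟨i, j, k, h1, h1', h2, h2', h3, h3'⟩ | ⟨i, j, k, h1, h1', h2, h2', h3, h3'⟩ |
    ⟨i, k, h2, h2'⟩
  · obtain ⟨a1, a2, a3, a4, a5, a6⟩ := Idx.ne6 h1 h1'
    obtain ⟨b1, b2, b3, b4, b5, b6⟩ := Idx.ne6 h2 h2'
    obtain ⟨c1, c2, c3, c4, c5, c6⟩ := Idx.ne6 h3 h3'
    refine Idx.indep ?_ ?_ ?_ ?_ ?_ ?_ <;> simp [*]
  · obtain ⟨a1, a2, a3, a4, a5, a6⟩ := Idx.ne6 h1 h1'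
    obtain ⟨b1, b2, b3, b4, b5, b6⟩ := Idx.ne6 h2 h2'
    obtain ⟨c1, c2, c3, c4, c5, c6⟩ := Idx.ne6 h3 h3'
    refine Idx.indep ?_ ?_ ?_ ?_ ?_ ?_ <;> simp [*]
  · obtain ⟨b1, b2, b3, b4, b5, b6⟩ := Idx.ne6 h2 h2'
    refine Idx.indep ?_ ?_ ?_ ?_ ?_ ?_ <;> simp [*]
theorem dec_ad {α γ δ σ : Rt n} (h : DecR α γ δ σ) : ∃ φ, wt φ α = 0 ∧ 0 < wt φ δ := by
  rcases h with ⟨i, j, k, h1, h1', h2, h2', h3, h3'⟩ | ⟨i, j, k, h1, h1', h2, h2', h3, h3'⟩ |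
    ⟨i, k, h2, h2'⟩
  · obtain ⟨a1, a2, a3, a4, a5, a6⟩ := Idx.ne6 h1 h1'
    obtain ⟨b1, b2, b3, b4, b5, b6⟩ := Idx.ne6 h2 h2'
    obtain ⟨c1, c2, c3, c4, c5, c6⟩ := Idx.ne6 h3 h3'
    refine Idx.indep ?_ ?_ ?_ ?_ ?_ ?_ <;> simp [*]
  · obtain ⟨a1, a2, a3, a4, a5, a6⟩ := Idx.ne6 h1 h1'
    obtain ⟨b1, b2, b3, b4, b5, b6⟩ := Idx.ne6 h2 h2'
    obtain ⟨c1, c2, c3, c4, c5, c6⟩ := Idx.ne6 h3 h3'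
    refine Idx.indep ?_ ?_ ?_ ?_ ?_ ?_ <;> simp [*]
  · obtain ⟨b1, b2, b3, b4, b5, b6⟩ := Idx.ne6 h2 h2'
    refine Idx.indep ?_ ?_ ?_ ?_ ?_ ?_ <;> simp [*]
theorem dec_as {α γ δ σ : Rt n} (h : DecR α γ δ σ) : ∃ φ, wt φ α = 0 ∧ 0 < wt φ σ := by
  rcases h with ⟨i, j, k, h1, h1', h2, h2', h3, h3'⟩ | ⟨i, j, k, h1, h1', h2, h2', h3, h3'⟩ |
    ⟨i, k, h2, h2'⟩
  · obtain ⟨a1, a2, a3, a4, a5, a6⟩ := Idx.ne6 h1 h1'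
    obtain ⟨b1, b2, b3, b4, b5, b6⟩ := Idx.ne6 h2 h2'
    obtain ⟨c1, c2, c3, c4, c5, c6⟩ := Idx.ne6 h3 h3'
    refine Idx.indep ?_ ?_ ?_ ?_ ?_ ?_ <;> simp [*]
  · obtain ⟨a1, a2, a3, a4, a5, a6⟩ := Idx.ne6 h1 h1'
    obtain ⟨b1, b2, b3, b4, b5, b6⟩ := Idx.ne6 h2 h2'
    obtain ⟨c1, c2, c3, c4, c5, c6⟩ := Idx.ne6 h3 h3'
    refine Idx.indep ?_ ?_ ?_ ?_ ?_ ?_ <;> simp [*]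
  · obtain ⟨b1, b2, b3, b4, b5, b6⟩ := Idx.ne6 h2 h2'
    refine Idx.indep ?_ ?_ ?_ ?_ ?_ ?_ <;> simp [*]
theorem dec_gd {α γ δ σ : Rt n} (h : DecR α γ δ σ) : ∃ φ, wt φ γ = 0 ∧ 0 < wt φ δ := by
  rcases h with ⟨i, j, k, h1, h1', h2, h2', h3, h3'⟩ | ⟨i, j, k, h1, h1', h2, h2', h3, h3'⟩ |
    ⟨i, k, h2, h2'⟩
  · obtain ⟨a1, a2, a3, a4, a5, a6⟩ := Idx.ne6 h1 h1'
    obtain ⟨b1, b2, b3, b4, b5, b6⟩ := Idx.ne6 h2 h2'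
    obtain ⟨c1, c2, c3, c4, c5, c6⟩ := Idx.ne6 h3 h3'
    refine Idx.indep ?_ ?_ ?_ ?_ ?_ ?_ <;> simp [*]
  · obtain ⟨a1, a2, a3, a4, a5, a6⟩ := Idx.ne6 h1 h1'
    obtain ⟨b1, b2, b3, b4, b5, b6⟩ := Idx.ne6 h2 h2'
    obtain ⟨c1, c2, c3, c4, c5, c6⟩ := Idx.ne6 h3 h3'
    refine Idx.indep ?_ ?_ ?_ ?_ ?_ ?_ <;> simp [*]
  · obtain ⟨b1, b2, b3, b4, b5, b6⟩ := Idx.ne6 h2 h2'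
    refine Idx.indep ?_ ?_ ?_ ?_ ?_ ?_ <;> simp [*]
theorem dec_dg {α γ δ σ : Rt n} (h : DecR α γ δ σ) : ∃ φ, wt φ δ = 0 ∧ 0 < wt φ γ := by
  rcases h with ⟨i, j, k, h1, h1', h2, h2', h3, h3'⟩ | ⟨i, j, k, h1, h1', h2, h2', h3, h3'⟩ |
    ⟨i, k, h2, h2'⟩
  · obtain ⟨a1, a2, a3, a4, a5, a6⟩ := Idx.ne6 h1 h1'
    obtain ⟨b1, b2, b3, b4, b5, b6⟩ := Idx.ne6 h2 h2'
    obtain ⟨c1, c2, c3, c4, c5, c6⟩ := Idx.ne6 h3 h3'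
    refine Idx.indep ?_ ?_ ?_ ?_ ?_ ?_ <;> simp [*]
  · obtain ⟨a1, a2, a3, a4, a5, a6⟩ := Idx.ne6 h1 h1'
    obtain ⟨b1, b2, b3, b4, b5, b6⟩ := Idx.ne6 h2 h2'
    obtain ⟨c1, c2, c3, c4, c5, c6⟩ := Idx.ne6 h3 h3'
    refine Idx.indep ?_ ?_ ?_ ?_ ?_ ?_ <;> simp [*]
  · obtain ⟨b1, b2, b3, b4, b5, b6⟩ := Idx.ne6 h2 h2'
    refine Idx.indep ?_ ?_ ?_ ?_ ?_ ?_ <;> simp [*]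

theorem dec_exists (hn : 4 ≤ n) (α : Rt n) : ∃ γ δ σ, DecR α γ δ σ := by
  obtain ⟨⟨i, j⟩, h⟩ := α
  obtain ⟨g, -, -, g1, g2, -⟩ := Idx.exists_out hn i.1 j.1
  have a := Idx.ne_of_fst (i := i) (j := (g, true)) g1.symm
  have b := Idx.ne_of_fst (i := (g, true)) (j := j) g2
  by_cases hs : j = Idx.neg i
  · subst hs
    exact ⟨_, _, _, DecR.lg i _ a.1 a.2⟩
  · have : i ≠ Idx.neg j := by rw [Ne, ← Idx.neg_eq_comm]; exact fun e => hs e.symm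
    exact ⟨_, _, _, DecR.s1 i j _ h this a.1 a.2 b.1 b.2⟩

theorem move (hn : 4 ≤ n) (β : Rt n) (P : Rt n → Prop) (h0 : ∀ α, Dj α β → P α)
    (hs : ∀ α γ δ σ, DecR α γ δ σ → P γ → P σ → P α) (α : Rt n) : P α := by
  obtain ⟨g, g', hg, a1, a2, a3, a4⟩ := Idx.exists_out hn β.1.1.1 β.1.2.1
  let S : Idx n → Prop := fun x => x.1 = g ∨ x.1 = g'
  have stA : ∀ i j (h : i ≠ j), S i → S j → P ⟨(i, j), h⟩ := by
    intro i j h hi hj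
    refine h0 _ ⟨?_, ?_, ?_, ?_⟩ <;> dsimp only
    · rcases hi with hi | hi <;> rw [hi] <;> assumption
    · rcases hi with hi | hi <;> rw [hi] <;> assumption
    · rcases hj with hj | hj <;> rw [hj] <;> assumption
    · rcases hj with hj | hj <;> rw [hj] <;> assumption
  have oth : ∀ i, S i → ∃ k, S k ∧ i.1 ≠ k.1 := by
    rintro i (hi | hi)
    · exact ⟨(g', true), Or.inr rfl, by rw [hi]; exact hg⟩
    · exact ⟨(g, true), Or.inl rfl, by rw [hi]; exact hg.symm⟩
  have fne : ∀ i j, S i → ¬ S j → i.1 ≠ j.1 := by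
    rintro i j hi hj e
    exact hj (by simpa only [S, e] using hi)
  have stB : ∀ i j (h : i ≠ j), S i → ¬ S j → P ⟨(i, j), h⟩ := by
    intro i j h hi hj
    obtain ⟨k, hk, hik⟩ := oth i hi
    have A := Idx.ne_of_fst (fne i j hi hj)
    have B := Idx.ne_of_fst hik
    have C := Idx.ne_of_fst (fne k j hk hj)
    exact hs _ _ _ _ (DecR.s1 i j k h A.2 B.1 B.2 C.1 C.2) (stA _ _ _ hi hk) (stA _ _ _ hi hk)
  have stC : ∀ i j (h : i ≠ j), ¬ S i → S j → P ⟨(i, j), h⟩ := by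
    intro i j h hi hj
    obtain ⟨k, hk, hik⟩ := oth j hj
    have A := Idx.ne_of_fst (fne j i hj hi).symm
    have B := Idx.ne_of_fst (fne k i hk hi).symm
    have C := Idx.ne_of_fst hik.symm
    exact hs _ _ _ _ (DecR.s2 i j k h A.2 B.1 B.2 C.1 C.2) (stA _ _ _ hk hj) (stA _ _ _ hk hj)
  obtain ⟨⟨i, j⟩, h⟩ := α
  by_cases hi : S i <;> by_cases hj : S j
  · exact stA _ _ _ hi hj
  · exact stB _ _ _ hi hj
  · exact stC _ _ _ hi hj
  · have hk : S (g, true) := Or.inl rfl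
    have B := Idx.ne_of_fst (fne (g, true) i hk hi).symm
    have C := Idx.ne_of_fst (fne (g, true) j hk hj)
    by_cases hl : j = Idx.neg i
    · subst hl
      exact hs _ _ _ _ (DecR.lg i _ B.1 B.2) (stA _ _ _ hk hk) (stC _ _ _ hi hk)
    · have : i ≠ Idx.neg j := by rw [Ne, ← Idx.neg_eq_comm]; exact fun e => hl e.symm
      exact hs _ _ _ _ (DecR.s1 i j _ h this B.1 B.2 C.1 C.2) (stC _ _ _ hi hk) (stC _ _ _ hi hk)
end Rt
namespace FormRingData
variable {A : Type*} [Ring A] {n : ℕ} {D : FormRingData A}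

theorem transvGen_eq (a : FormIdeal D) : D.transvGen n a.I a.Gamma =
    {x | ∃ i j : Idx n, i ≠ j ∧ ∃ c ∈ lev a i j, x = D.el i j c} := by
  ext x
  constructor
  · rintro (⟨i, j, h, h', c, hc, rfl⟩ | ⟨i, g, hg, rfl⟩)
    · have h2 : j ≠ Idx.neg i := (Idx.ne6 h h').2.2.2.1
      exact ⟨i, j, h, c, by rwa [lev_short a h2], by rw [el, if_neg h2]⟩
    · exact ⟨i, Idx.neg i, (Idx.neg_ne i).symm, g, by rwa [lev_long], by
        rw [el, if_pos rfl, D.lpow_long]⟩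
  · rintro ⟨i, j, h, c, hc, rfl⟩
    by_cases h2 : j = Idx.neg i
    · subst h2
      rw [lev_long] at hc
      exact Or.inr ⟨i, c, hc, by rw [el, if_pos rfl, D.lpow_long]⟩
    · rw [lev_short a h2] at hc
      refine Or.inl ⟨i, j, h, ?_, c, hc, by rw [el, if_neg h2]⟩
      rw [Ne, ← Idx.neg_eq_comm]; exact fun e => h2 e.symm

theorem EUmax_eq : D.EUmax n = Subgroup.closure
    {x | ∃ i j : Idx n, i ≠ j ∧ ∃ c ∈ lev (topFI D) i j, x = D.el i j c} := by
  rw [← transvGen_eq]; rfl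

theorem el_mem (a : FormIdeal D) {i j : Idx n} (h : i ≠ j) {c : A} (hc : c ∈ lev a i j) :
    D.el i j c ∈ D.EUmax n := by
  rw [EUmax_eq]
  exact Subgroup.subset_closure ⟨i, j, h, c, lev_le_top a i j hc, rfl⟩

theorem closure_lift {G : Type*} [Group G] (E : Subgroup G) {S : Set G} (hS : S ⊆ E) (t : E)
    (ht : (t : G) ∈ Subgroup.closure S) : t ∈ Subgroup.closure {x : E | (x : G) ∈ S} := by
  have h : (Subgroup.closure {x : E | (x : G) ∈ S}).map E.subtype = Subgroup.closure S := by
    rw [MonoidHom.map_closure]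
    congr 1
    ext x
    constructor
    · rintro ⟨y, hy, rfl⟩; exact hy
    · intro hx; exact ⟨⟨x, hS hx⟩, hx, rfl⟩
  rw [← h] at ht
  obtain ⟨y, hy, e⟩ := ht
  rwa [← Subtype.ext e]

/-- root subgroups inside the elementary group -/
def XE (n : ℕ) (a : FormIdeal D) (p : Rt n) : Subgroup ↥(D.EUmax n) where
  carrier := {t | ∃ c ∈ lev a p.1.1 p.1.2, (t : GLn A n) = D.el p.1.1 p.1.2 c}
  mul_mem' := by
    rintro x y ⟨c, hc, e⟩ ⟨d, hd, f⟩
    exact ⟨c + d, add_mem hc hd, by rw [Subgroup.coe_mul, e, f, D.el_add p.2]⟩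
  one_mem' := ⟨0, zero_mem _, by rw [D.el_zero p.2]; rfl⟩
  inv_mem' := by
    rintro x ⟨c, hc, e⟩
    exact ⟨-c, neg_mem hc, by rw [Subgroup.coe_inv, e, D.el_neg p.2]⟩

theorem mem_XE {a : FormIdeal D} {p : Rt n} {t : ↥(D.EUmax n)} :
    t ∈ XE n a p ↔ ∃ c ∈ lev a p.1.1 p.1.2, (t : GLn A n) = D.el p.1.1 p.1.2 c := Iff.rfl

theorem XE_dual_le (a : FormIdeal D) (i j k l : Idx n) (h : i ≠ j) (h' : k ≠ l)
    (e1 : k = Idx.neg j) (e2 : l = Idx.neg i) :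
    XE n a ⟨(i, j), h⟩ ≤ XE n a ⟨(k, l), h'⟩ := by
  subst e1 e2
  rintro t ⟨c, hc, e⟩
  obtain ⟨c', hc', e'⟩ := lev_dual a h hc
  exact ⟨c', hc', e.trans e'⟩
theorem XE_dual (a : FormIdeal D) (i j k l : Idx n) (h : i ≠ j) (h' : k ≠ l)
    (e1 : k = Idx.neg j) (e2 : l = Idx.neg i) :
    XE n a ⟨(i, j), h⟩ = XE n a ⟨(k, l), h'⟩ :=
  le_antisymm (XE_dual_le a _ _ _ _ h h' e1 e2)
    (XE_dual_le a _ _ _ _ h' h (by rw [e2, Idx.neg_neg]) (by rw [e1, Idx.neg_neg]))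

theorem commute_XE {a b : FormIdeal D} {p q : Rt n} (h1 : p.1.2 ≠ q.1.1)
    (h2 : p.1.2 ≠ Idx.neg q.1.2) (h3 : p.1.1 ≠ Idx.neg q.1.1) (h4 : p.1.1 ≠ q.1.2)
    {x y : ↥(D.EUmax n)} (hx : x ∈ XE n a p) (hy : y ∈ XE n b q) : Commute x y := by
  obtain ⟨c, hc, e⟩ := hx
  obtain ⟨d, hd, f⟩ := hy
  apply Subtype.ext
  rw [Subgroup.coe_mul, Subgroup.coe_mul, e, f]
  exact D.el_commute p.2 q.2 h1 h2 h3 h4 c d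

theorem coe_comm (x y : ↥(D.EUmax n)) : ((⁅x, y⁆ : ↥(D.EUmax n)) : GLn A n) = ⁅(x : GLn A n), (y : GLn A n)⁆ :=
  rfl

theorem dichE (p q : Rt n) : (∃ φ, Rt.wt φ p = 0 ∧ 0 < Rt.wt φ q) ∨
    ((∀ φ, Rt.wt φ p = Rt.wt φ q) ∧ (∀ a : FormIdeal D, XE n a p = XE n a q) ∧
      ∀ a : FormIdeal D, XE n a (Rt.opp p) = XE n a (Rt.opp q)) ∨
    ((∀ φ, Rt.wt φ (Rt.opp p) = Rt.wt φ q) ∧ (∀ a : FormIdeal D, XE n a (Rt.opp p) = XE n a q) ∧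
      ∀ a : FormIdeal D, XE n a p = XE n a (Rt.opp q)) := by
  obtain ⟨⟨i, j⟩, h⟩ := p
  obtain ⟨⟨k, l⟩, h'⟩ := q
  by_cases h1 : k = i ∧ l = j
  · obtain ⟨rfl, rfl⟩ := h1
    exact Or.inr (Or.inl ⟨fun _ => rfl, fun _ => rfl, fun _ => rfl⟩)
  by_cases h2 : k = Idx.neg j ∧ l = Idx.neg i
  · refine Or.inr (Or.inl ⟨fun φ => ?_, fun a => XE_dual a _ _ _ _ _ _ h2.1 h2.2,
      fun a => XE_dual a _ _ _ _ _ _ h2.2 h2.1⟩)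
    simp only [Rt.wt, h2.1, h2.2, φ.2]; omega
  by_cases h3 : k = j ∧ l = i
  · obtain ⟨rfl, rfl⟩ := h3
    exact Or.inr (Or.inr ⟨fun _ => rfl, fun _ => rfl, fun _ => rfl⟩)
  by_cases h4 : k = Idx.neg i ∧ l = Idx.neg j
  · refine Or.inr (Or.inr ⟨fun φ => ?_, fun a => XE_dual a _ _ _ _ _ _ h4.1 h4.2,
      fun a => XE_dual a _ _ _ _ _ _ h4.2 h4.1⟩)
    simp only [Rt.wt, Rt.opp, h4.1, h4.2, φ.2]; omega
  exact Or.inl (Idx.indep h h' h1 h2 h3 h4)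

theorem dec_eqE {α γ δ σ : Rt n} (h : DecR α γ δ σ) (a : FormIdeal D) (x : ↥(D.EUmax n))
    (hx : x ∈ XE n a α) : ∃ d ∈ XE n (topFI D) δ, ∃ g ∈ XE n a γ, ∃ s ∈ XE n a σ,
    x = ⁅d, g⁆ * s := by
  rcases h with ⟨i, j, k, h1, h1', h2, h2', h3, h3'⟩ | ⟨i, j, k, h1, h1', h2, h2', h3, h3'⟩ |
    ⟨i, k, h2, h2'⟩
  · obtain ⟨c, hc, e⟩ := hx
    dsimp only at hc e
    obtain ⟨a1, a2, a3, a4, a5, a6⟩ := Idx.ne6 h1 h1'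
    obtain ⟨b1, b2, b3, b4, b5, b6⟩ := Idx.ne6 h2 h2'
    obtain ⟨c1, c2, c3, c4, c5, c6⟩ := Idx.ne6 h3 h3'
    have hd : (1 : A) ∈ lev (topFI D) k j := by rw [lev_short _ c4]; trivial
    have hg : -c ∈ lev a i k := by
      rw [lev_short _ a4] at hc; rw [lev_short _ b4]; exact neg_mem hc
    refine ⟨⟨_, el_mem _ h3 hd⟩, ⟨_, hd, rfl⟩, ⟨_, el_mem _ h2 hg⟩, ⟨_, hg, rfl⟩, 1, one_mem _, ?_⟩
    apply Subtype.ext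
    rw [mul_one, coe_comm, e]
    dsimp only
    rw [← commutatorElement_inv, D.el_a h2 h2' h3 h3' h1 h1', mul_one, ← D.el_neg h1, neg_neg]
  · obtain ⟨c, hc, e⟩ := hx
    dsimp only at hc e
    obtain ⟨a1, a2, a3, a4, a5, a6⟩ := Idx.ne6 h1 h1'
    obtain ⟨b1, b2, b3, b4, b5, b6⟩ := Idx.ne6 h2 h2'
    obtain ⟨c1, c2, c3, c4, c5, c6⟩ := Idx.ne6 h3 h3'
    have hd : (1 : A) ∈ lev (topFI D) i k := by rw [lev_short _ b4]; trivial
    have hg : c ∈ lev a k j := by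
      rw [lev_short _ a4] at hc; rw [lev_short _ c4]; exact hc
    refine ⟨⟨_, el_mem _ h2 hd⟩, ⟨_, hd, rfl⟩, ⟨_, el_mem _ h3 hg⟩, ⟨_, hg, rfl⟩, 1, one_mem _, ?_⟩
    apply Subtype.ext
    rw [mul_one, coe_comm, e]
    dsimp only
    rw [D.el_a h2 h2' h3 h3' h1 h1', one_mul]
  · obtain ⟨c, hc, e⟩ := hx
    dsimp only at hc e
    rw [lev_long] at hc
    obtain ⟨b1, b2, b3, b4, b5, b6⟩ := Idx.ne6 h2 h2'
    have hd : (1 : A) ∈ lev (topFI D) i k := by rw [lev_short _ b4]; trivial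
    have hg : c ∈ lev a k (Idx.neg k) := by rw [lev_long]; exact hc
    have hs : -(D.nu k * c) ∈ lev a i (Idx.neg k) := by
      rw [lev_short _ (by simpa using b2)]
      exact neg_mem (a.mul_mem_left _ _ (a.gamma_le_I hc))
    refine ⟨⟨_, el_mem _ h2 hd⟩, ⟨_, hd, rfl⟩, ⟨_, el_mem _ (Idx.neg_ne k).symm hg⟩, ⟨_, hg, rfl⟩,
      ⟨_, el_mem _ h2' hs⟩, ⟨_, hs, rfl⟩, ?_⟩
    apply Subtype.ext
    rw [Subgroup.coe_mul, coe_comm, e]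
    dsimp only
    rw [D.el_d h2 h2' _ _ (D.lam_max (a.gamma_le_Lambda hc)), D.bar_one, mul_one, one_mul, mul_one,
      D.el_neg h2']
    have := D.el_commute (i := i) (j := Idx.neg k) (k := i) (l := Idx.neg i) h2'
      (Idx.neg_ne i).symm b6 (by simpa using b6) (Idx.neg_ne i).symm (Idx.neg_ne i).symm
      (D.nu k * c) c
    rw [this.eq, mul_inv_cancel_right]

/-- the root graded structure of the elementary unitary group -/
def RGE (D : FormRingData A) (hn : 4 ≤ n) : RG ↥(D.EUmax n) (FormIdeal D) (Rt n) (Wt n) where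
  X := XE n
  opp := Rt.opp
  top := topFI D
  LP := LPr
  wt := Rt.wt
  Dec := DecR
  Dj := Rt.Dj
  opp_opp := fun _ => rfl
  wt_opp := fun φ p => by simp [Rt.wt, Rt.opp]
  gen := by
    rw [eq_top_iff]
    intro t _
    have h := (EUmax_eq (D := D) (n := n)).le t.2
    refine Subgroup.closure_mono ?_ (closure_lift (D.EUmax n) ?_ t h)
    · rintro x ⟨i, j, h, c, hc, e⟩
      exact ⟨⟨(i, j), h⟩, c, hc, e⟩
    · rintro x ⟨i, j, h, c, hc, rfl⟩
      exact el_mem _ h hc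
  LP_left := LPr_top
  LP_symm := fun _ _ _ h => h.symm
  C0 := fun a b α x y hx hy => commute_XE α.2.symm (Idx.neg_ne _).symm (Idx.neg_ne _).symm α.2 hx hy
  C1 := by
    rintro a b c φ α β x y hL w1 w2 ⟨u, hu, e⟩ ⟨v, hv, f⟩
    have h := C1G φ.2 hL α.2 β.2 w1 w2 hu hv
    rw [← e, ← f, ← coe_comm] at h
    refine Subgroup.closure_mono ?_ (closure_lift (D.EUmax n) ?_ _ h)
    · rintro x ⟨i, j, h, w, c, hc, e⟩
      exact ⟨⟨(i, j), h⟩, w, c, hc, e⟩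
    · rintro x ⟨i, j, h, w, c, hc, rfl⟩
      exact el_mem _ h hc
  dich := dichE
  dec_exists := Rt.dec_exists hn
  dec_ag := fun _ _ _ _ h => Rt.dec_ag h
  dec_ad := fun _ _ _ _ h => Rt.dec_ad h
  dec_as := fun _ _ _ _ h => Rt.dec_as h
  dec_gd := fun _ _ _ _ h => Rt.dec_gd h
  dec_dg := fun _ _ _ _ h => Rt.dec_dg h
  dec_eq := fun _ _ _ _ h a x hx => dec_eqE h a x hx
  dj := by
    rintro α β ⟨h1, h2, h3, h4⟩ a b x y hx hy
    have k1 := Idx.ne_of_fst h1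
    have k2 := Idx.ne_of_fst h2
    have k3 := Idx.ne_of_fst h3
    have k4 := Idx.ne_of_fst h4
    rcases hx with hx | hx <;> rcases hy with hy | hy
    · exact commute_XE k3.1 k4.2 k1.2 k2.1 hx hy
    · exact commute_XE k4.1 k3.2 k2.2 k1.1 hx hy
    · exact commute_XE k1.1 k2.2 k3.2 k4.1 hx hy
    · exact commute_XE k2.1 k1.2 k4.2 k3.1 hx hy
  move := fun β P h0 hs α => Rt.move hn β P h0 hs α

theorem mem_X (hn : 4 ≤ n) (a : FormIdeal D) {i j : Idx n} (h : i ≠ j) {c : A}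
    (hc : c ∈ lev a i j) (ht : D.el i j c ∈ D.EUmax n) :
    ∃ γ, (⟨D.el i j c, ht⟩ : ↥(D.EUmax n)) ∈ (RGE D hn).X a γ := by
  refine ⟨⟨(i, j), h⟩, ?_⟩
  show _ ∈ XE n a _
  rw [mem_XE]
  exact ⟨c, hc, by dsimp only⟩

theorem X_mem (hn : 4 ≤ n) (a : FormIdeal D) {t : ↥(D.EUmax n)}
    (ht : ∃ γ, t ∈ (RGE D hn).X a γ) :
    ∃ i j : Idx n, i ≠ j ∧ ∃ c ∈ lev a i j, (t : GLn A n) = D.el i j c := by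
  obtain ⟨p, hp⟩ := ht
  obtain ⟨c, hc, e⟩ := mem_XE.1 hp
  exact ⟨p.1.1, p.1.2, p.2, c, hc, e⟩

theorem EU_eq (hn : 4 ≤ n) (a : FormIdeal D) :
    D.EU n a.I a.Gamma = ((RGE D hn).Eu a).map (D.EUmax n).subtype := by
  unfold EU RG.Eu Subgroup.normalClosure
  rw [MonoidHom.map_closure, transvGen_eq]
  congr 1
  ext x
  constructor
  · rintro ⟨g, hg, t, ⟨i, j, h, c, hc, rfl⟩, rfl⟩
    have ht : D.el i j c ∈ D.EUmax n := el_mem a h hc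
    refine ⟨⟨g, hg⟩ * ⟨_, ht⟩ * ⟨g, hg⟩⁻¹, ?_, by
      rw [Subgroup.coe_subtype, Subgroup.coe_mul, Subgroup.coe_mul, Subgroup.coe_inv]⟩
    refine Group.mem_conjugatesOfSet_iff.2 ⟨⟨_, ht⟩, mem_X hn a h hc ht, ?_⟩
    exact isConj_iff.2 ⟨⟨g, hg⟩, rfl⟩
  · rintro ⟨y, hy, rfl⟩
    obtain ⟨t, ht, hc'⟩ := Group.mem_conjugatesOfSet_iff.1 hy
    obtain ⟨i, j, h, c, hc, e⟩ := X_mem hn a ht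
    obtain ⟨g, rfl⟩ := isConj_iff.1 hc'
    exact ⟨g, g.2, t, ⟨i, j, h, c, hc, e⟩, by
      rw [Subgroup.coe_subtype, Subgroup.coe_mul, Subgroup.coe_mul, Subgroup.coe_inv]⟩

/-- additive subgroup of parameters -/
def parK (D : FormRingData A) (K : Subgroup (GLn A n)) (i j : Idx n) (h : i ≠ j) :
    AddSubgroup A where
  carrier := {c | D.el i j c ∈ K}
  add_mem' := by
    intro c d hc hd
    show D.el i j (c + d) ∈ K
    rw [D.el_add h]; exact mul_mem hc hd
  zero_mem' := by show D.el i j 0 ∈ K; rw [D.el_zero h]; exact one_mem _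
  neg_mem' := by
    intro c hc
    show D.el i j (-c) ∈ K
    rw [D.el_neg h]; exact inv_mem hc

theorem gens_mem (hn : 4 ≤ n) (a b : FormIdeal D) (K : Subgroup (GLn A n))
    (h0 : ∀ x ∈ K, ∀ (i j : Idx n), i ≠ j → ∀ c ∈ lev (topFI D) i j, ⁅x, D.el i j c⁆ ∈ K)
    (hab : ∀ (i j k l : Idx n), i ≠ j → k ≠ l → ∀ c ∈ lev a i j, ∀ d ∈ lev b k l,
      ⁅D.el i j c, D.el k l d⁆ ∈ K)
    (hba : ∀ (i j k l : Idx n), i ≠ j → k ≠ l → ∀ c ∈ lev b i j, ∀ d ∈ lev a k l,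
      ⁅D.el i j c, D.el k l d⁆ ∈ K)
    (i j : Idx n) (h : i ≠ j) : lev (prodFI a b) i j ≤ parK D K i j h := by
  have short : ∀ i j (h : i ≠ j), j ≠ Idx.neg i → ∀ c ∈ (prodFI a b).I, D.el i j c ∈ K := by
    intro i j h hs
    obtain ⟨g, -, -, g1, g2, -⟩ := Idx.exists_out hn i.1 j.1
    obtain ⟨A1, A2⟩ := Idx.ne_of_fst (i := i) (j := (g, true)) g1.symm
    obtain ⟨B1, B2⟩ := Idx.ne_of_fst (i := (g, true)) (j := j) g2
    have hs' : i ≠ Idx.neg j := by rw [Ne, ← Idx.neg_eq_comm]; exact fun e => hs e.symm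
    have A4 := (Idx.ne6 A1 A2).2.2.2.1
    have B4 := (Idx.ne6 B1 B2).2.2.2.1
    refine symI_le (K := parK D K i j h) ?_ ?_
    · intro x hx y hy
      show D.el i j (x * y) ∈ K
      rw [← D.el_a A1 A2 B1 B2 h hs']
      exact hab _ _ _ _ A1 B1 _ (by rwa [lev_short _ A4]) _ (by rwa [lev_short _ B4])
    · intro x hx y hy
      show D.el i j (y * x) ∈ K
      rw [← D.el_a A1 A2 B1 B2 h hs']
      exact hba _ _ _ _ A1 B1 _ (by rwa [lev_short _ A4]) _ (by rwa [lev_short _ B4])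
  by_cases hs : j = Idx.neg i
  · subst hs
    rw [lev_long]
    obtain ⟨g, -, -, g1, -⟩ := Idx.exists_out hn i.1 i.1
    obtain ⟨k, hk⟩ : ∃ k : Idx n, k = (g, true) := ⟨_, rfl⟩
    obtain ⟨A1, A2⟩ := Idx.ne_of_fst (i := i) (j := k) (by rw [hk]; exact g1.symm)
    obtain ⟨-, A3, -, A4, A5, A6⟩ := Idx.ne6 A1 A2
    have long : ∀ x c, c ∈ D.Lambda → ⁅D.el i k x, D.el k (Idx.neg k) c⁆ ∈ K →
        x * c ∈ (prodFI a b).I → D.el i (Idx.neg i) (x * c * D.bar x) ∈ K := by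
      intro x c hc h1 h2
      rw [D.el_d A1 A2 _ _ (D.lam_max hc)] at h1
      refine (Subgroup.mul_mem_cancel_left K (short _ _ A2 (by simpa using A3) _ ?_)).1 h1
      rw [mul_assoc]; exact (prodFI a b).mul_mem_left _ _ h2
    refine D.symG_le (D.gammaMin_le' ?_ ?_) ?_ ?_
    · intro z hz
      have h1 := h0 _ (short i k A1 A4 _ ((prodFI a b).mul_mem_left (D.nu i) z hz)) k (Idx.neg i) A4 1
        (by rw [lev_short _ (by simpa using A1)]; trivial)
      rw [D.el_b A1 A2, mul_one, ← mul_assoc, D.nui_nu, one_mul] at h1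
      exact h1
    · intro z hz c hc
      refine long _ _ hc (h0 _ (short i k A1 A4 _ hz) _ _ (Idx.neg_ne k).symm _ ?_)
        ((prodFI a b).mul_mem_right _ _ hz)
      rw [lev_long]; exact hc
    · intro y hy c hc
      refine long _ _ (a.gamma_le_Lambda hc) (hba _ _ _ _ A1 (Idx.neg_ne k).symm _ ?_ _ ?_) ?_
      · rwa [lev_short _ A4]
      · rwa [lev_long]
      · exact mem_symI_right (a.gamma_le_I hc) hy
    · intro y hy c hc
      refine long _ _ (b.gamma_le_Lambda hc) (hab _ _ _ _ A1 (Idx.neg_ne k).symm _ ?_ _ ?_) ?_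
      · rwa [lev_short _ A4]
      · rwa [lev_long]
      · exact mem_symI_left hy (b.gamma_le_I hc)
  · rw [lev_short _ hs]
    exact short i j h hs

theorem hK (hn : 4 ≤ n) (a b : FormIdeal D) :
    (RGE D hn).Eu (prodFI a b) ≤ ⁅(RGE D hn).Eu a, (RGE D hn).Eu b⁆ := by
  have hEu : ∀ (a : FormIdeal D) (i j : Idx n) (h : i ≠ j) (c : A) (hc : c ∈ lev a i j),
      (⟨D.el i j c, el_mem a h hc⟩ : ↥(D.EUmax n)) ∈ (RGE D hn).Eu a := fun a i j h c hc =>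
    Subgroup.subset_normalClosure (mem_X hn a h hc _)
  let H := ⁅(RGE D hn).Eu a, (RGE D hn).Eu b⁆
  have hN : H.Normal := Subgroup.commutator_normal _ _
  refine Subgroup.normalClosure_le_normal ?_
  intro t ht
  obtain ⟨i, j, h, c, hc, e⟩ := X_mem hn _ ht
  have key := gens_mem hn a b (H.map (D.EUmax n).subtype) ?_ ?_ ?_ i j h hc
  · obtain ⟨t', ht', e'⟩ := key
    have : t = t' := Subtype.ext (e.trans e'.symm)
    rw [this]; exact ht'
  · rintro _ ⟨x, hx, rfl⟩ i j h c hc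
    refine ⟨⁅x, ⟨D.el i j c, el_mem _ h hc⟩⁆, ?_, by
      rw [Subgroup.coe_subtype, coe_comm]⟩
    rw [commutatorElement_def, mul_assoc, mul_assoc, ← mul_assoc _ x⁻¹]
    exact mul_mem hx (hN.conj_mem _ (inv_mem hx) _)
  · intro i j k l h h' c hc d hd
    exact ⟨⁅(⟨D.el i j c, el_mem _ h hc⟩ : ↥(D.EUmax n)), (⟨D.el k l d, el_mem _ h' hd⟩ : ↥(D.EUmax n))⁆,
      Subgroup.commutator_mem_commutator (hEu a i j h c hc) (hEu b k l h' d hd), by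
        rw [Subgroup.coe_subtype, coe_comm]⟩
  · intro i j k l h h' c hc d hd
    refine ⟨⁅(⟨D.el i j c, el_mem _ h hc⟩ : ↥(D.EUmax n)), (⟨D.el k l d, el_mem _ h' hd⟩ : ↥(D.EUmax n))⁆, ?_, by
      rw [Subgroup.coe_subtype, coe_comm]⟩
    show _ ∈ H
    rw [← inv_mem_iff, commutatorElement_inv]
    exact Subgroup.commutator_mem_commutator (hEu a k l h' d hd) (hEu b i j h c hc)

/-- the form ideal of a bracketing tree -/
def treeFI : CommTree D → FormIdeal D
  | .leaf a => a
  | .node s t => prodFI (treeFI s) (treeFI t)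

theorem treeFI_idl : ∀ t : CommTree D, t.idl = ((treeFI t).I, (treeFI t).Gamma)
  | .leaf a => rfl
  | .node s t => by
    rw [CommTree.idl, treeFI_idl s, treeFI_idl t]; rfl

/-- normal form of tree commutators in `E` -/
theorem node_eq (hn : 4 ≤ n) : ∀ s t : CommTree D, (CommTree.node s t).grp n =
    (⁅(RGE D hn).Eu (treeFI s), (RGE D hn).Eu (treeFI t)⁆).map (D.EUmax n).subtype
  | .leaf a, .leaf b => by
    simp only [CommTree.grp, treeFI]
    rw [EU_eq hn, EU_eq hn, Subgroup.map_commutator]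
  | .node s s', .leaf b => by
    rw [CommTree.grp, node_eq hn s s']
    simp only [CommTree.grp, treeFI]
    rw [EU_eq hn, ← Subgroup.map_commutator, (RGE D hn).triple (LPr_prod _ _) (hK hn _ _)]
  | .leaf a, .node t t' => by
    rw [CommTree.grp, node_eq hn t t']
    simp only [CommTree.grp, treeFI]
    rw [EU_eq hn, ← Subgroup.map_commutator, Subgroup.commutator_comm,
      (RGE D hn).triple (LPr_prod _ _) (hK hn _ _), Subgroup.commutator_comm]
  | .node s s', .node t t' => by
    rw [CommTree.grp, node_eq hn s s', node_eq hn t t']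
    simp only [treeFI]
    rw [← Subgroup.map_commutator, 
      (RGE D hn).quad (LPr_prod _ _) (hK hn _ _) (LPr_prod _ _) (hK hn _ _)]
termination_by s t => sizeOf s + sizeOf t
decreasing_by all_goals simp; try omega

end FormRingData
/-- Theorem 7: for `n ≥ 4` any multiple commutator of relative elementary
subgroups with cut point given by the outermost bracket equals the double
commutator of the elementary subgroups of the correspondingly bracketed
symmetrised products. -/
theorem statement4 {A : Type*} [Ring A] (D : FormRingData A) (n : ℕ) (hn : 4 ≤ n)
    (t₁ t₂ : CommTree D) :
    (CommTree.node t₁ t₂).grp n =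
      ⁅D.EU n t₁.idl.1 t₁.idl.2, D.EU n t₂.idl.1 t₂.idl.2⁆ := by
  rw [FormRingData.node_eq hn, FormRingData.treeFI_idl t₁, FormRingData.treeFI_idl t₂,
    FormRingData.EU_eq hn, FormRingData.EU_eq hn, Subgroup.map_commutator]
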